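/- The only rational points on the affine curve y² = 9x⁶ − 99x⁴ + 27x² − 1 are (1/3, 8/9), (1/3, −8/9), (−1/3, 8/9), and (−1/3, −8/9). That is, for rational numbers x and y, the equation y² = 9x⁶ − 99x⁴ + 27x² − 1 holds if and only if x ∈ {1/3, −1/3} and y ∈ {8/9, −8/9}. -/

import Mathlib

/-!
The curve `y² = 9x⁶ - 99x⁴ + 27x² - 1` can be rewritten as `y² = 9c² - N³` with `N = 3x² + 1` and
`c = 2x(x² - 1)`. The cubic `r³ - Nr - c` splits, with roots `r = 2x, 1 - x, -1 - x`, and each root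
gives a point `(-N / r², y / r³)` of the elliptic curve `E : V² = U³ + 9(U + 1)²`; the three points
are collinear, so their sum is zero (`onE_root`, `collinear_sum`).

The group `E(ℚ)` is generated by `Q = (-3, 3)` and the point `T = (0, 3)` of order three
(`inQT_all`). This is a descent by a `3`-isogeny and its dual: modulo cubes, `V - 3(U + 1)` takes
only the values `2^i 3^j`, all of which occur on `⟨Q, T⟩` (`OnE.cube_class`, `GenClass.of_six_mul`,
`GenClass.of_three_mul`), and a point where it is a cube is a triple (`eq_neg_triple_of_cube`).
The latter amounts to solving `A³ + B³ + 6ABe = 6e³` in integers, which factors as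
`(D - 6ε)(C² - CD + D²) = -6ε³`, so that `C + Dω` is a cube in the Eisenstein integers
(`cubic_descent`, `eisenstein_cube`). The infinite descent is run with an explicit canonical height
`H` satisfying `nh - 13/3 ≤ H ≤ nh + 3` (`exists_height`).

The three points attached to `x` have naive heights that differ only by a bounded amount
(`ht_param`), hence so do their canonical heights: writing them as `aᵢQ + bᵢT`, one has
`a₁ + a₂ + a₃ = 0` and `|aᵢ² - aⱼ²| H(Q) < 13 < 27 H(Q)`. This forces some `|aᵢ| ≤ 2`
(`exists_small`), and the finitely many such points with negative first coordinate give only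
`x = ±1/3`.
-/

/-! ### The canonical height attached to a quasi-quadratic function -/

/-- Tate's construction: a nonnegative function satisfying one half of the parallelogram law and the
lower duplication bound, both up to constants, is at bounded distance from a function satisfying
the parallelogram law. The limit exists because the two normalised sequences `b`, `a` of bounds are
monotone; the reverse half of the law follows by applying the first half to `P + R` and `P - R`. -/
theorem exists_canonical_height {G : Type*} [AddCommGroup G] (h : G → ℝ) (k c : ℝ)
    (h0 : h 0 = 0) (hnn : ∀ P, 0 ≤ h P)
    (hup : ∀ P R, h (P + R) + h (P - R) ≤ 2 * h P + 2 * h R + k)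
    (hlo : ∀ P, 4 * h P - c ≤ h (P + P)) :
    ∃ H : G → ℝ, (∀ P R, H (P + R) + H (P - R) = 2 * H P + 2 * H R) ∧
      (∀ P, h P - c / 3 ≤ H P) ∧ (∀ P, H P ≤ h P + k / 3) := by
  have hdup : ∀ P, h (P + P) ≤ 4 * h P + k := fun P => by
    have := hup P P
    rw [sub_self, h0] at this
    linarith
  have hk : 0 ≤ k := by
    have := hup 0 0
    simp only [add_zero, sub_zero, h0] at this
    linarith
  let b : G → ℕ → ℝ := fun P n => (h (2 ^ n • P) + k / 3) / 4 ^ n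
  let a : G → ℕ → ℝ := fun P n => (h (2 ^ n • P) - c / 3) / 4 ^ n
  have hdbl : ∀ P : G, ∀ n : ℕ, 2 ^ (n + 1) • P = 2 ^ n • P + 2 ^ n • P := fun P n => by
    rw [pow_succ, mul_two, add_smul]
  have hb : ∀ P, Antitone (b P) := fun P => antitone_nat_of_succ_le fun n => by
    simp only [b]
    rw [hdbl, pow_succ, div_le_div_iff₀ (by positivity) (by positivity)]
    have := hdup (2 ^ n • P)
    have h4 : (0 : ℝ) < 4 ^ n := by positivity
    nlinarith
  have ha : ∀ P, Monotone (a P) := fun P => monotone_nat_of_le_succ fun n => by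
    simp only [a]
    rw [hdbl, pow_succ, div_le_div_iff₀ (by positivity) (by positivity)]
    have := hlo (2 ^ n • P)
    have h4 : (0 : ℝ) < 4 ^ n := by positivity
    nlinarith
  have hbdd : ∀ P, BddBelow (Set.range (b P)) := fun P => ⟨0, by
    rintro _ ⟨n, rfl⟩
    have := hnn (2 ^ n • P)
    simp only [b]
    positivity⟩
  have hlim : ∀ P, Filter.Tendsto (b P) Filter.atTop (nhds (⨅ n, b P n)) := fun P =>
    tendsto_atTop_ciInf (hb P) (hbdd P)
  have hz : ∀ r : ℝ, Filter.Tendsto (fun n : ℕ => r / 4 ^ n) Filter.atTop (nhds 0) := fun r => by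
    have := (tendsto_pow_atTop_nhds_zero_of_lt_one (r := (1 / 4 : ℝ)) (by norm_num)
      (by norm_num)).const_mul r
    simpa [div_eq_mul_inv] using this
  have hlima : ∀ P, Filter.Tendsto (a P) Filter.atTop (nhds (⨅ n, b P n)) := fun P => by
    have := (hlim P).sub (hz (k / 3 + c / 3))
    rw [sub_zero] at this
    refine this.congr fun n => ?_
    simp only [a, b]
    ring
  refine ⟨fun P => ⨅ n, b P n, ?_, ?_, ?_⟩
  · have hle : ∀ P R, (⨅ n, b (P + R) n) + (⨅ n, b (P - R) n) ≤
        2 * (⨅ n, b P n) + 2 * (⨅ n, b R n) := fun P R => by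
      have h1 := (hlim (P + R)).add (hlim (P - R))
      have h2 := (((hlim P).const_mul 2).add ((hlim R).const_mul 2)).add (hz k)
      rw [add_zero] at h2
      refine le_of_tendsto_of_tendsto' h1 (h2) fun n => ?_
      have := hup (2 ^ n • P) (2 ^ n • R)
      rw [← smul_add, ← smul_sub] at this
      simp only [b]
      rw [← add_div, mul_div_assoc', mul_div_assoc', ← add_div, ← add_div]
      refine div_le_div_of_nonneg_right ?_ (by positivity)
      linarith
    have hd : ∀ P, (⨅ n, b (P + P) n) = 4 * (⨅ n, b P n) := fun P => by
      have h1 := ((hlim P).comp (Filter.tendsto_add_atTop_nat 1)).const_mul 4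
      refine tendsto_nhds_unique (hlim (P + P)) (h1.congr fun n => ?_)
      simp only [b, Function.comp]
      rw [hdbl, smul_add, pow_succ]
      field_simp
    intro P R
    refine le_antisymm (hle P R) ?_
    have := hle (P + R) (P - R)
    rw [show P + R + (P - R) = P + P by abel, show P + R - (P - R) = R + R by abel, hd, hd] at this
    linarith
  · intro P
    have := (ha P).ge_of_tendsto (hlima P) 0
    simpa [a] using this
  · intro P
    have := (hb P).le_of_tendsto (hlim P) 0
    simpa [b] using this

theorem quad_zsmul {G : Type*} [AddCommGroup G] (H : G → ℝ)
    (hp : ∀ P R, H (P + R) + H (P - R) = 2 * H P + 2 * H R) (P : G) (n : ℤ) :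
    H (n • P) = n ^ 2 * H P := by
  have h0 : H 0 = 0 := by have := hp 0 0; simp at this; linarith
  have hnat : ∀ n : ℕ, H (n • P) = n ^ 2 * H P ∧ H ((n + 1) • P) = (n + 1) ^ 2 * H P := fun n => by
    induction n with
    | zero => simp [h0]
    | succ n ih =>
      refine ⟨by push_cast; exact ih.2, ?_⟩
      have := hp ((n + 1) • P) P
      rw [show (n + 1) • P + P = (n + 1 + 1) • P by rw [add_smul (n + 1) 1, one_smul],
        show (n + 1) • P - P = n • P by rw [add_smul n 1, one_smul]; abel, ih.1, ih.2] at this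
      push_cast
      linarith
  have hneg : ∀ P, H (-P) = H P := fun P => by
    have := hp 0 P
    simp [h0] at this
    linarith
  obtain ⟨m, rfl | rfl⟩ := n.eq_nat_or_neg
  · simpa using (hnat m).1
  · rw [neg_smul, hneg]; simpa using (hnat m).1

/-! ### The elliptic curve `V² = U³ + 9(U + 1)²` -/

/-- The elliptic curve `V² = U³ + 9(U + 1)²`. -/
def curveE : WeierstrassCurve.Affine ℚ := ⟨0, 9, 0, 18, 9⟩

theorem curveE_a₁ : curveE.a₁ = 0 := rfl
theorem curveE_a₂ : curveE.a₂ = 9 := rfl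
theorem curveE_a₃ : curveE.a₃ = 0 := rfl
theorem curveE_a₄ : curveE.a₄ = 18 := rfl
theorem curveE_a₆ : curveE.a₆ = 9 := rfl

/-- The affine equation of `curveE`. -/
def OnE (u v : ℚ) : Prop := v ^ 2 = u ^ 3 + 9 * (u + 1) ^ 2

theorem OnE.nonsingular {u v : ℚ} (h : OnE u v) : curveE.Nonsingular u v := by
  refine (WeierstrassCurve.Affine.equation_iff_nonsingular_of_Δ_ne_zero (W := curveE) ?_).mp ?_
  · simp only [WeierstrassCurve.Δ, WeierstrassCurve.b₂, WeierstrassCurve.b₄, WeierstrassCurve.b₆,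
      WeierstrassCurve.b₈, curveE_a₁, curveE_a₂, curveE_a₃, curveE_a₄, curveE_a₆]
    norm_num
  · rw [WeierstrassCurve.Affine.equation_iff]
    simp only [curveE_a₁, curveE_a₂, curveE_a₃, curveE_a₄, curveE_a₆]
    unfold OnE at h
    linarith

/-- The point of `curveE` with given affine coordinates. -/
def pt (u v : ℚ) (h : OnE u v) : curveE.Point := .some u v h.nonsingular

theorem pt_cases (P : curveE.Point) : P = 0 ∨ ∃ u v h, P = pt u v h := by
  rcases P with _ | ⟨u, v, h⟩
  · exact Or.inl rfl
  · refine Or.inr ⟨u, v, ?_, rfl⟩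
    have := h.1
    rw [WeierstrassCurve.Affine.equation_iff] at this
    simp only [curveE_a₁, curveE_a₂, curveE_a₃, curveE_a₄, curveE_a₆] at this
    unfold OnE
    linarith

theorem pt_ne_zero {u v : ℚ} (h : OnE u v) : pt u v h ≠ 0 :=
  WeierstrassCurve.Affine.Point.some_ne_zero _

theorem pt_inj {u v u' v' : ℚ} {h : OnE u v} {h' : OnE u' v'} :
    pt u v h = pt u' v' h' ↔ u = u' ∧ v = v' := by
  simp [pt]

theorem OnE.neg {u v : ℚ} (h : OnE u v) : OnE u (-v) := by
  unfold OnE at *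
  linarith

theorem pt_neg {u v : ℚ} (h : OnE u v) : -pt u v h = pt u (-v) h.neg := by
  simp only [pt, WeierstrassCurve.Affine.Point.neg_some, WeierstrassCurve.Affine.negY, curveE_a₁,
      curveE_a₃]
  simp

/-- Chord addition: `l` is the slope of the line through the two points. -/
theorem pt_add {u₁ v₁ u₂ v₂ u₃ v₃ : ℚ} (h₁ : OnE u₁ v₁) (h₂ : OnE u₂ v₂) (hne : u₁ ≠ u₂) (l : ℚ)
    (hl : l * (u₁ - u₂) = v₁ - v₂) (hu : u₃ = l ^ 2 - 9 - u₁ - u₂)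
    (hv : v₃ = -(v₁ + l * (u₃ - u₁))) : ∃ h₃, pt u₁ v₁ h₁ + pt u₂ v₂ h₂ = pt u₃ v₃ h₃ := by
  have hs : curveE.slope u₁ u₂ v₁ v₂ = l := by
    rw [WeierstrassCurve.Affine.slope_of_X_ne hne, ← hl,
      mul_div_cancel_right₀ _ (sub_ne_zero.mpr hne)]
  rcases hP : pt u₁ v₁ h₁ + pt u₂ v₂ h₂ with _ | ⟨a, b, h⟩
  · rw [pt, pt, WeierstrassCurve.Affine.Point.add_of_X_ne hne] at hP
    exact absurd hP (WeierstrassCurve.Affine.Point.some_ne_zero _)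
  · obtain h0 | ⟨u, v, h', hQ⟩ := pt_cases (.some a b h)
    · exact absurd h0 (WeierstrassCurve.Affine.Point.some_ne_zero _)
    rw [pt, pt, WeierstrassCurve.Affine.Point.add_of_X_ne hne, hQ, pt] at hP
    simp only [WeierstrassCurve.Affine.Point.some.injEq, WeierstrassCurve.Affine.addY,
      WeierstrassCurve.Affine.negAddY, WeierstrassCurve.Affine.negY, WeierstrassCurve.Affine.addX,
      hs,
      curveE_a₁, curveE_a₂, curveE_a₃] at hP
    have e1 : u = u₃ := by rw [hu]; linarith [hP.1]
    have e2 : v = v₃ := by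
      rw [hv, hu]
      linarith [hP.2]
    subst e1 e2
    exact ⟨h', hQ⟩

/-- Tangent doubling: `l` is the slope of the tangent line. -/
theorem pt_dbl {u v u₃ v₃ : ℚ} (h : OnE u v) (hne : v ≠ 0) (l : ℚ)
    (hl : l * (2 * v) = 3 * u ^ 2 + 18 * u + 18) (hu : u₃ = l ^ 2 - 9 - 2 * u)
    (hv : v₃ = -(v + l * (u₃ - u))) : ∃ h₃, pt u v h + pt u v h = pt u₃ v₃ h₃ := by
  have hy : v ≠ curveE.negY u v := by
    simp only [WeierstrassCurve.Affine.negY, curveE_a₁,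
      curveE_a₃]
    intro hh
    apply hne
    linarith
  have hs : curveE.slope u u v v = l := by
    rw [WeierstrassCurve.Affine.slope_of_Y_ne rfl hy, div_eq_iff (sub_ne_zero.mpr hy)]
    simp only [WeierstrassCurve.Affine.negY, curveE_a₁, curveE_a₂, curveE_a₃, curveE_a₄]
    linarith
  rcases hP : pt u v h + pt u v h with _ | ⟨a, b, h'⟩
  · rw [pt, WeierstrassCurve.Affine.Point.add_self_of_Y_ne hy] at hP
    exact absurd hP (WeierstrassCurve.Affine.Point.some_ne_zero _)
  · obtain h0 | ⟨u', v', h'', hQ⟩ := pt_cases (.some a b h')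
    · exact absurd h0 (WeierstrassCurve.Affine.Point.some_ne_zero _)
    rw [pt, WeierstrassCurve.Affine.Point.add_self_of_Y_ne hy, hQ, pt] at hP
    simp only [WeierstrassCurve.Affine.Point.some.injEq, WeierstrassCurve.Affine.addY,
      WeierstrassCurve.Affine.negAddY, WeierstrassCurve.Affine.negY, WeierstrassCurve.Affine.addX,
      hs,
      curveE_a₁, curveE_a₂, curveE_a₃] at hP
    have e1 : u' = u₃ := by rw [hu]; linarith [hP.1]
    have e2 : v' = v₃ := by
      rw [hv, hu]
      linarith [hP.2]
    subst e1 e2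
    exact ⟨h'', hQ⟩


/-- In lowest terms a rational point has the shape `(n / e², m / e³)`. -/
theorem OnE.integral {u v : ℚ} (h : OnE u v) : ∃ e m : ℤ, 0 < e ∧ (u.den : ℤ) = e ^ 2 ∧
    IsCoprime u.num e ∧ u = u.num / (e : ℚ) ^ 2 ∧ v = m / (e : ℚ) ^ 3 ∧
    m ^ 2 = u.num ^ 3 + 9 * (u.num + e ^ 2) ^ 2 * e ^ 2 := by
  set n := u.num with hn
  set d := u.den with hd
  have hd0 : (d : ℚ) ≠ 0 := by exact_mod_cast u.den_nz
  have hu : u = n / d := (Rat.num_div_den u).symm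
  have hv : v = v.num / v.den := (Rat.num_div_den v).symm
  have hvd : (v.den : ℚ) ≠ 0 := by exact_mod_cast v.den_nz
  have hcop : IsCoprime n (d : ℤ) := by
    rw [Int.isCoprime_iff_gcd_eq_one]
    simpa [Int.gcd] using u.reduced
  have hvc : IsCoprime v.num (v.den : ℤ) := by
    rw [Int.isCoprime_iff_gcd_eq_one]
    simpa [Int.gcd] using v.reduced
  -- clearing denominators; both sides are coprime to the respective denominators
  have hZ : v.num ^ 2 * (d : ℤ) ^ 3 = (n ^ 3 + 9 * (n + d) ^ 2 * d) * (v.den : ℤ) ^ 2 := by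
    have h' := h
    unfold OnE at h'
    rw [hu, hv] at h'
    field_simp at h'
    have : (v.num : ℚ) ^ 2 * (d : ℚ) ^ 3 = (n ^ 3 + 9 * (n + d) ^ 2 * d) * (v.den : ℚ) ^ 2 := by
      linear_combination h'
    exact_mod_cast this
  have hc2 : IsCoprime (n ^ 3 + 9 * (n + d) ^ 2 * d) ((d : ℤ) ^ 3) := by
    refine IsCoprime.pow_right ?_
    exact (hcop.pow_left (m := 3)).add_mul_right_left (9 * (n + d) ^ 2)
  have h1 : (d : ℤ) ^ 3 ∣ (v.den : ℤ) ^ 2 :=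
    hc2.symm.dvd_of_dvd_mul_left ⟨v.num ^ 2, by rw [← hZ]; ring⟩
  have h2 : (v.den : ℤ) ^ 2 ∣ (d : ℤ) ^ 3 :=
    (hvc.pow (m := 2) (n := 2)).symm.dvd_of_dvd_mul_left
      ⟨(n ^ 3 + 9 * (n + d) ^ 2 * d), by rw [hZ]; ring⟩
  have h3 : v.den ^ 2 = d ^ 3 := Nat.dvd_antisymm (by exact_mod_cast h2) (by exact_mod_cast h1)
  have h4 : d ∣ v.den := by
    rw [← Nat.pow_dvd_pow_iff (two_ne_zero), h3]
    exact pow_dvd_pow _ (by norm_num)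
  obtain ⟨k, hk⟩ := h4
  have hdpos : 0 < d := u.den_pos
  have h5 : d = k ^ 2 := by
    rw [hk] at h3
    have : d ^ 2 * k ^ 2 = d ^ 2 * d := by linear_combination h3
    exact (Nat.eq_of_mul_eq_mul_left (by positivity) this).symm
  have hkpos : 0 < k := Nat.pos_of_ne_zero (by rintro rfl; simp at h5; omega)
  have hk0 : (k : ℚ) ≠ 0 := by positivity
  have hdk : (d : ℤ) = (k : ℤ) ^ 2 := by exact_mod_cast h5
  have hvd3 : (v.den : ℤ) = (k : ℤ) ^ 3 := by
    rw [hk]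
    push_cast
    rw [hdk]
    ring
  refine ⟨k, v.num, by exact_mod_cast hkpos, hdk, ?_, ?_, ?_, ?_⟩
  · rw [hdk] at hcop
    exact (IsCoprime.pow_right_iff two_pos).mp hcop
  · rw [hu]
    congr 1
    exact_mod_cast hdk
  · rw [hv]
    congr 1
    · simp only [← hv]
    · exact_mod_cast hvd3
  · rw [hvd3, hdk] at hZ
    have hk6 : ((k : ℤ) ^ 6) ≠ 0 := by positivity
    refine mul_right_cancel₀ hk6 ?_
    linear_combination hZ

/-- There is no rational point of order two: the cubic has no root modulo `2`. -/
theorem OnE.v_ne_zero {u v : ℚ} (h : OnE u v) : v ≠ 0 := by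
  intro hv
  obtain ⟨e, m, he, -, hc, -, hm, heq⟩ := h.integral
  have he' : (e : ℚ) ≠ 0 := by exact_mod_cast he.ne'
  have hm0 : m = 0 := by
    rw [hv, eq_comm, div_eq_zero_iff] at hm
    rcases hm with hm | hm
    · exact_mod_cast hm
    · exact absurd hm (pow_ne_zero _ he')
  rw [hm0] at heq
  have h2 : Even (u.num ^ 3 + 9 * (u.num + e ^ 2) ^ 2 * e ^ 2) := by rw [← heq]; simp
  have hne : Even u.num ∧ Even e := by
    by_cases h1 : Even u.num <;> by_cases h3 : Even e <;>
      simp_all [Int.even_add, Int.even_mul, Int.even_pow, show ¬ Even (9 : ℤ) by decide]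
  have := hc.isUnit_of_dvd' hne.1.two_dvd hne.2.two_dvd
  exact absurd this (by decide)

/-! ### Naive heights and the chord construction -/

/-- The naive multiplicative height of a rational number. -/
def ht (u : ℚ) : ℤ := max |u.num| u.den

theorem one_le_ht (u : ℚ) : 1 ≤ ht u :=
  le_max_of_le_right (by exact_mod_cast u.den_pos)

theorem num_le_ht (u : ℚ) : |u.num| ≤ ht u := le_max_left _ _

theorem den_le_ht (u : ℚ) : |(u.den : ℤ)| ≤ ht u := by
  rw [abs_of_nonneg (by positivity)]
  exact le_max_right _ _

theorem isCoprime_num_den (u : ℚ) : IsCoprime u.num (u.den : ℤ) := by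
  rw [Int.isCoprime_iff_gcd_eq_one]
  simpa [Int.gcd] using u.reduced

/-- A fraction equal to `u` is an integral multiple of the reduced fraction. -/
theorem exists_mul_num_den {u : ℚ} {a b : ℤ} (hb : b ≠ 0) (h : u * b = a) :
    ∃ k : ℤ, k ≠ 0 ∧ a = k * u.num ∧ b = k * u.den := by
  have hd : (u.den : ℚ) ≠ 0 := by exact_mod_cast u.den_nz
  have hd' : (u.den : ℤ) ≠ 0 := by exact_mod_cast u.den_nz
  have hZ : u.num * b = a * u.den := by
    have : (u.num : ℚ) * b = a * u.den := by
      rw [← h]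
      nth_rewrite 2 [← Rat.num_div_den u]
      field_simp
    exact_mod_cast this
  obtain ⟨k, hk⟩ : (u.den : ℤ) ∣ b :=
    (isCoprime_num_den u).symm.dvd_of_dvd_mul_left ⟨a, by rw [hZ]; ring⟩
  refine ⟨k, ?_, ?_, by rw [hk]; ring⟩
  · rintro rfl
    exact hb (by rw [hk]; ring)
  · refine mul_right_cancel₀ hd' ?_
    rw [← hZ, hk]
    ring

theorem ht_le {u : ℚ} {a b B : ℤ} (hb : b ≠ 0) (h : u * b = a) (ha : |a| ≤ B) (hbB : |b| ≤ B) :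
    ht u ≤ B := by
  obtain ⟨k, hk, rfl, rfl⟩ := exists_mul_num_den hb h
  have h1 : 1 ≤ |k| := Int.one_le_abs hk
  rw [abs_mul] at ha hbB
  refine max_le ?_ ?_
  · nlinarith [abs_nonneg u.num]
  · rw [abs_of_nonneg (by positivity : (0 : ℤ) ≤ u.den)] at hbB
    nlinarith [show (0 : ℤ) ≤ u.den by positivity]

/-- If `α, β` are the roots of `c T² - b T + a`, the product of their heights is at most twice the
size of the coefficients. -/
theorem ht_mul_ht_le {α β : ℚ} {a b c B : ℤ} (hc : c ≠ 0) (hprod : α * β * c = a)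
    (hsum : (α + β) * c = b) (ha : |a| ≤ B) (hb : |b| ≤ B) (hcB : |c| ≤ B) :
    ht α * ht β ≤ 2 * B := by
  set p := α.num
  set q : ℤ := (α.den : ℤ) with hq
  set r := β.num
  set s : ℤ := (β.den : ℤ) with hs
  have hq0 : (q : ℚ) ≠ 0 := by simp [hq]
  have hs0 : (s : ℚ) ≠ 0 := by simp [hs]
  have hα : α = p / q := (Rat.num_div_den α).symm
  have hβ : β = r / s := (Rat.num_div_den β).symm
  obtain ⟨x, y, hxy⟩ : IsCoprime p q := isCoprime_num_den α
  obtain ⟨z, w, hzw⟩ : IsCoprime r s := isCoprime_num_den β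
  have e1 : q * s * a = c * (p * r) := by
    have : (q * s * a : ℚ) = c * (p * r) := by
      rw [← hprod, hα, hβ]
      field_simp
    exact_mod_cast this
  have e2 : q * s * b = c * (p * s + q * r) := by
    have : (q * s * b : ℚ) = c * (p * s + q * r) := by
      rw [← hsum, hα, hβ]
      field_simp
    exact_mod_cast this
  -- the content of `(q T - p)(s T - r)` is one
  obtain ⟨k, hk⟩ : q * s ∣ c := by
    have h1 : q * s ∣ c * (p * r) := ⟨a, e1.symm⟩
    have h2 : q * s ∣ c * (p * s + q * r) := ⟨b, e2.symm⟩
    have h3 : q * s ∣ c * (q * s) := Dvd.intro_left _ rfl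
    have h4 : q * s ∣ c * (p * s) ^ 2 := by
      have := (h2.mul_right (p * s)).sub (h1.mul_right (q * s))
      refine this.trans (dvd_of_eq ?_)
      ring
    have h5 : q * s ∣ c * (q * r) ^ 2 := by
      have := (h2.mul_right (q * r)).sub (h1.mul_right (q * s))
      refine this.trans (dvd_of_eq ?_)
      ring
    have h6 : c = c * (p * r) * (x * z * (x * z * p * r + 2 * (x * w * p * s + y * z * q * r +
        y * w * q * s)) + 2 * x * w * y * z * (q * s)) + c * (p * s) ^ 2 * (x * w) ^ 2 +
        c * (q * r) ^ 2 * (y * z) ^ 2 + c * (q * s) * (y * w * (y * w * q * s +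
        2 * (x * w * p * s + y * z * q * r))) := by
      have : c = c * ((x * p + y * q) * (z * r + w * s)) ^ 2 := by rw [hxy, hzw]; ring
      refine this.trans ?_
      ring
    rw [h6]
    exact ((((h1.mul_right _).add (h4.mul_right _)).add (h5.mul_right _)).add (h3.mul_right _))
  have hqs : q * s ≠ 0 := by
    intro h
    exact hc (by rw [hk, h, zero_mul])
  have hk0 : k ≠ 0 := by
    rintro rfl
    exact hc (by rw [hk, mul_zero])
  have ea : a = k * (p * r) := by
    refine mul_left_cancel₀ hqs ?_
    rw [e1, hk]
    ring
  have eb : b = k * (p * s + q * r) := by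
    refine mul_left_cancel₀ hqs ?_
    rw [e2, hk]
    ring
  have hk1 : 1 ≤ |k| := Int.one_le_abs hk0
  have aux : ∀ t : ℤ, |k * t| ≤ B → |t| ≤ B := fun t ht => by
    rw [abs_mul] at ht
    nlinarith [abs_nonneg t]
  have b1 : |p| * |r| ≤ B := by rw [← abs_mul]; exact aux _ (ea ▸ ha)
  have b2 := aux _ (eb ▸ hb)
  have b3 : |q| * |s| ≤ B := by
    rw [← abs_mul]
    refine aux _ ?_
    rwa [mul_comm, ← hk]
  have hB : 0 ≤ B := (abs_nonneg a).trans ha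
  have b4 : |p * s| * |q * r| ≤ B * B := by
    calc |p * s| * |q * r| = (|p| * |r|) * (|q| * |s|) := by simp only [abs_mul]; ring
      _ ≤ B * B := mul_le_mul b1 b3 (by positivity) hB
  have b5 : |p * s| ≤ 2 * B ∧ |q * r| ≤ 2 * B := by
    have t1 : |p * s| ≤ |p * s + q * r| + |q * r| := by
      simpa using abs_sub (p * s + q * r) (q * r)
    have t2 : |q * r| ≤ |p * s + q * r| + |p * s| := by
      simpa using abs_sub (p * s + q * r) (p * s)
    rcases le_or_gt |p * s| B with h | h <;> rcases le_or_gt |q * r| B with h' | h'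
    · constructor <;> linarith
    · constructor <;> linarith
    · constructor <;> linarith
    · nlinarith
  have hsabs : |s| = (β.den : ℤ) := abs_of_nonneg (by positivity)
  have hqabs : |q| = (α.den : ℤ) := abs_of_nonneg (by positivity)
  have hα' : ht α = max |p| |q| := by rw [hqabs]; rfl
  have hβ' : ht β = max |r| |s| := by rw [hsabs]; rfl
  rw [abs_mul, abs_mul] at b5
  rw [hα', hβ']
  rcases max_choice |p| |q| with h | h <;> rcases max_choice |r| |s| with h' | h' <;> rw [h, h'] <;>
    linarith [b5.1, b5.2]

/-- The first coordinates `u₃, u₄` of `P + R` and `P - R` are the roots of a quadratic whose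
coefficients are bounded in terms of the heights of `u₁, u₂`. -/
theorem chord_ht {u₁ v₁ u₂ v₂ u₃ u₄ : ℚ} (h₁ : OnE u₁ v₁) (h₂ : OnE u₂ v₂) (hne : u₁ ≠ u₂)
    (l l' : ℚ) (hl : l * (u₁ - u₂) = v₁ - v₂) (hl' : l' * (u₁ - u₂) = v₁ + v₂)
    (hu₃ : u₃ = l ^ 2 - 9 - u₁ - u₂) (hu₄ : u₄ = l' ^ 2 - 9 - u₁ - u₂) :
    ht u₃ * ht u₄ ≤ 296 * (ht u₁ * ht u₂) ^ 2 := by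
  unfold OnE at h₁ h₂
  have hsub : u₁ - u₂ ≠ 0 := sub_ne_zero.mpr hne
  have hs : (u₃ + u₄) * (u₁ - u₂) ^ 2 =
      2 * (u₁ + u₂) * (u₁ * u₂) + 36 * (u₁ * u₂) + 36 * (u₁ + u₂) + 36 := by
    have e1 : l ^ 2 * (u₁ - u₂) ^ 2 = (v₁ - v₂) ^ 2 := by rw [← hl]; ring
    have e2 : l' ^ 2 * (u₁ - u₂) ^ 2 = (v₁ + v₂) ^ 2 := by rw [← hl']; ring
    rw [hu₃, hu₄]
    linear_combination e1 + e2 + 2 * h₁ + 2 * h₂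
  have hp : u₃ * u₄ * (u₁ - u₂) ^ 2 = (u₁ * u₂) ^ 2 - 36 * (u₁ * u₂) - 36 * (u₁ + u₂) := by
    refine mul_right_cancel₀ (pow_ne_zero 2 hsub) ?_
    have e1 : l ^ 2 * (u₁ - u₂) ^ 2 = (v₁ - v₂) ^ 2 := by rw [← hl]; ring
    have e2 : l' ^ 2 * (u₁ - u₂) ^ 2 = (v₁ + v₂) ^ 2 := by rw [← hl']; ring
    have e3 : u₃ * (u₁ - u₂) ^ 2 = (v₁ - v₂) ^ 2 - (9 + u₁ + u₂) * (u₁ - u₂) ^ 2 := by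
      rw [hu₃]; linear_combination e1
    have e4 : u₄ * (u₁ - u₂) ^ 2 = (v₁ + v₂) ^ 2 - (9 + u₁ + u₂) * (u₁ - u₂) ^ 2 := by
      rw [hu₄]; linear_combination e2
    have e5 : (v₁ ^ 2 - v₂ ^ 2) ^ 2 - 2 * (v₁ ^ 2 + v₂ ^ 2) * ((9 + u₁ + u₂) * (u₁ - u₂) ^ 2) +
        ((9 + u₁ + u₂) * (u₁ - u₂) ^ 2) ^ 2 =
        ((u₁ * u₂) ^ 2 - 36 * (u₁ * u₂) - 36 * (u₁ + u₂)) * (u₁ - u₂) ^ 2 := by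
      rw [h₁, h₂]
      ring
    rw [← e5]
    calc u₃ * u₄ * (u₁ - u₂) ^ 2 * (u₁ - u₂) ^ 2 =
        (u₃ * (u₁ - u₂) ^ 2) * (u₄ * (u₁ - u₂) ^ 2) := by ring
      _ = _ := by rw [e3, e4]; ring
  set n₁ := u₁.num
  set n₂ := u₂.num
  set d₁ : ℤ := (u₁.den : ℤ) with hd₁
  set d₂ : ℤ := (u₂.den : ℤ) with hd₂
  have hq₁ : (d₁ : ℚ) ≠ 0 := by simp [hd₁]
  have hq₂ : (d₂ : ℚ) ≠ 0 := by simp [hd₂]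
  have e₁ : u₁ * d₁ = n₁ := Rat.mul_den_eq_num u₁
  have e₂ : u₂ * d₂ = n₂ := Rat.mul_den_eq_num u₂
  have a₁ : |n₁| ≤ ht u₁ := num_le_ht u₁
  have a₂ : |n₂| ≤ ht u₂ := num_le_ht u₂
  have b₁ : |d₁| ≤ ht u₁ := den_le_ht u₁
  have b₂ : |d₂| ≤ ht u₂ := den_le_ht u₂
  set M := ht u₁ * ht u₂ with hM
  have hM1 : |n₁ * n₂| ≤ M := by rw [abs_mul]; exact mul_le_mul a₁ a₂ (abs_nonneg _) (by linarith [one_le_ht u₁])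
  have hM2 : |d₁ * d₂| ≤ M := by rw [abs_mul]; exact mul_le_mul b₁ b₂ (abs_nonneg _) (by linarith [one_le_ht u₁])
  have hM3 : |n₁ * d₂| ≤ M := by rw [abs_mul]; exact mul_le_mul a₁ b₂ (abs_nonneg _) (by linarith [one_le_ht u₁])
  have hM4 : |d₁ * n₂| ≤ M := by rw [abs_mul]; exact mul_le_mul b₁ a₂ (abs_nonneg _) (by linarith [one_le_ht u₁])
  have hM0 : 0 ≤ M := (abs_nonneg _).trans hM1
  have hsq : ∀ {x y : ℤ}, |x| ≤ M → |y| ≤ M → |x * y| ≤ M ^ 2 := fun hx hy => by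
    rw [abs_mul, sq]
    exact mul_le_mul hx hy (abs_nonneg _) hM0
  have key := ht_mul_ht_le (α := u₃) (β := u₄)
    (a := (n₁ * n₂) ^ 2 - 36 * (n₁ * n₂) * (d₁ * d₂) - 36 * (n₁ * d₂ + d₁ * n₂) * (d₁ * d₂))
    (b := 2 * (n₁ * d₂ + d₁ * n₂) * (n₁ * n₂) + 36 * (n₁ * n₂) * (d₁ * d₂) +
      36 * (n₁ * d₂ + d₁ * n₂) * (d₁ * d₂) + 36 * (d₁ * d₂) ^ 2)
    (c := (n₁ * d₂ - d₁ * n₂) ^ 2) (B := 148 * M ^ 2) ?_ ?_ ?_ ?_ ?_ ?_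
  · linarith
  · refine pow_ne_zero 2 fun h => hsub ?_
    have h' : (n₁ : ℚ) * d₂ - d₁ * n₂ = 0 := by exact_mod_cast h
    rw [← e₁, ← e₂] at h'
    have : (u₁ - u₂) * (d₁ * d₂) = 0 := by linear_combination h'
    simpa [hq₁, hq₂] using this
  · push_cast
    rw [← e₁, ← e₂]
    linear_combination (d₁ * d₂ : ℚ) ^ 2 * hp
  · push_cast
    rw [← e₁, ← e₂]
    linear_combination (d₁ * d₂ : ℚ) ^ 2 * hs
  all_goals
    have g1 := abs_le.mp (hsq hM1 hM1)
    have g2 := abs_le.mp (hsq hM1 hM2)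
    have g3 := abs_le.mp (hsq hM3 hM2)
    have g4 := abs_le.mp (hsq hM4 hM2)
    have g5 := abs_le.mp (hsq hM3 hM1)
    have g6 := abs_le.mp (hsq hM4 hM1)
    have g7 := abs_le.mp (hsq hM2 hM2)
    have g8 := abs_le.mp (hsq hM3 hM3)
    have g9 := abs_le.mp (hsq hM4 hM4)
    have g10 := abs_le.mp (hsq hM3 hM4)
    rw [abs_le]
    constructor <;> nlinarith only [g1, g2, g3, g4, g5, g6, g7, g8, g9, g10]

/-! ### Naive heights and duplication -/

theorem dbl_coord {u v u' l : ℚ} (h : OnE u v)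
    (hl : l * (2 * v) = 3 * u ^ 2 + 18 * u + 18) (hu : u' = l ^ 2 - 9 - 2 * u) :
    u' * (4 * (u ^ 3 + 9 * (u + 1) ^ 2)) = u * (u ^ 3 - 36 * u - 72) := by
  unfold OnE at h
  have e : l ^ 2 * (4 * v ^ 2) = (3 * u ^ 2 + 18 * u + 18) ^ 2 := by rw [← hl]; ring
  rw [hu, ← h]
  rw [h] at e ⊢
  linear_combination e

/-- The height of the double of a point, in both directions. The lower bound comes from resultant
identities for numerator and denominator of the duplication formula. -/
theorem dbl_ht {u u' : ℚ} (hf : u ^ 3 + 9 * (u + 1) ^ 2 ≠ 0)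
    (h : u' * (4 * (u ^ 3 + 9 * (u + 1) ^ 2)) = u * (u ^ 3 - 36 * u - 72)) :
    ht u' ≤ 148 * ht u ^ 4 ∧ ht u ^ 4 ≤ 5508 * ht u' := by
  set n := u.num
  set d : ℤ := (u.den : ℤ) with hd
  have hd0 : (d : ℚ) ≠ 0 := by simp [hd]
  have hu : u * d = n := Rat.mul_den_eq_num u
  have hM1 : |n| ≤ ht u := num_le_ht u
  have hM2 : |d| ≤ ht u := den_le_ht u
  have hcop : IsCoprime n d := isCoprime_num_den u
  have hM : ht u = max |n| |d| := by rw [hd, abs_of_nonneg (by positivity : (0 : ℤ) ≤ u.den)]; rfl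
  set M := ht u
  have hM0 : 1 ≤ M := one_le_ht u
  set a := n * (n ^ 3 - 36 * n * d ^ 2 - 72 * d ^ 3) with ha
  set b := 4 * d * (n ^ 3 + 9 * n ^ 2 * d + 18 * n * d ^ 2 + 9 * d ^ 3) with hb
  have hb0 : b ≠ 0 := by
    intro h0
    have h1 : (b : ℚ) = 0 := by exact_mod_cast h0
    have h2 : (d : ℚ) ^ 4 * (4 * (u ^ 3 + 9 * (u + 1) ^ 2)) = b := by
      rw [hb]; push_cast; rw [← hu]; ring
    rw [h1] at h2
    simp [hd0, hf] at h2
  have hab : u' * b = a := by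
    rw [hb, ha]; push_cast; rw [← hu]
    linear_combination (d : ℚ) ^ 4 * h
  have mono : ∀ i : ℕ, i ≤ 4 → |n ^ i * d ^ (4 - i)| ≤ M ^ 4 := fun i hi => by
    rw [abs_mul, abs_pow, abs_pow]
    calc |n| ^ i * |d| ^ (4 - i) ≤ M ^ i * M ^ (4 - i) := by gcongr
      _ = M ^ 4 := by rw [← pow_add]; congr 1; omega
  have mono3 : ∀ i : ℕ, i ≤ 3 → |n ^ i * d ^ (3 - i)| ≤ M ^ 3 := fun i hi => by
    rw [abs_mul, abs_pow, abs_pow]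
    calc |n| ^ i * |d| ^ (3 - i) ≤ M ^ i * M ^ (3 - i) := by gcongr
      _ = M ^ 3 := by rw [← pow_add]; congr 1; omega
  constructor
  · have g0 := abs_le.mp (mono 0 (by norm_num))
    have g1 := abs_le.mp (mono 1 (by norm_num))
    have g2 := abs_le.mp (mono 2 (by norm_num))
    have g3 := abs_le.mp (mono 3 (by norm_num))
    have g4 := abs_le.mp (mono 4 (by norm_num))
    norm_num at g0 g1 g2 g3 g4
    refine ht_le hb0 hab ?_ ?_
    all_goals
      rw [abs_le]
      constructor <;> nlinarith only [g0, g1, g2, g3, g4]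
  · obtain ⟨k, hk0, hka, hkb⟩ := exists_mul_num_den hb0 hab
    have key1 : (-24 * d ^ 3 - 44 * n * d ^ 2 - 16 * n ^ 2 * d + n ^ 3) * a +
        (-48 * n * d ^ 2 - 16 * n ^ 2 * d + 4 * n ^ 3) * b = n ^ 7 := by
      rw [ha, hb]; ring
    have key2 : (12 * d ^ 3 - 24 * n * d ^ 2 - 4 * n ^ 2 * d) * a +
        (27 * d ^ 3 - 30 * n * d ^ 2 - 3 * n ^ 2 * d + n ^ 3) * b = 972 * d ^ 7 := by
      rw [ha, hb]; ring
    have hka' : k ∣ a := ⟨_, hka⟩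
    have hkb' : k ∣ b := ⟨_, hkb⟩
    have hkn : k ∣ n ^ 7 := key1 ▸ (hka'.mul_left _).add (hkb'.mul_left _)
    have hkd : k ∣ 972 * d ^ 7 := key2 ▸ (hka'.mul_left _).add (hkb'.mul_left _)
    have hk972 : k ∣ 972 := by
      obtain ⟨x, y, hxy⟩ := hcop.pow (m := 7) (n := 7)
      have : (972 : ℤ) = 972 * x * n ^ 7 + y * (972 * d ^ 7) := by linear_combination -972 * hxy
      rw [this]
      exact (hkn.mul_left _).add (hkd.mul_left _)
    have hk27 : ¬ (27 : ℤ) ∣ k := by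
      intro h27
      have h27a : (27 : ℤ) ∣ a := h27.trans ⟨_, hka⟩
      have h27b : (27 : ℤ) ∣ b := h27.trans ⟨_, hkb⟩
      have h3n : (3 : ℤ) ∣ n := by
        refine Int.prime_three.dvd_of_dvd_pow (n := 4) ?_
        have : n ^ 4 = a + 3 * (12 * n ^ 2 * d ^ 2 + 24 * n * d ^ 3) := by rw [ha]; ring
        rw [this]
        exact ((by norm_num : (3 : ℤ) ∣ 27).trans h27a).add (dvd_mul_right _ _)
      obtain ⟨c, hc⟩ := h3n
      have h3d : (3 : ℤ) ∣ d := by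
        refine Int.prime_three.dvd_of_dvd_pow (n := 4) ?_
        obtain ⟨t, ht⟩ := h27b
        refine ⟨t - d ^ 4 - 4 * d * (c ^ 3 + 3 * c ^ 2 * d + 2 * c * d ^ 2), ?_⟩
        rw [hb, hc] at ht
        linarith
      exact absurd (hcop.isUnit_of_dvd' ⟨c, hc⟩ h3d) (by decide)
    have hk36 : |k| ≤ 36 := by
      have h1 : k.natAbs ∈ Nat.divisors 972 := by
        rw [Nat.mem_divisors]
        exact ⟨by simpa using Int.natAbs_dvd_natAbs.mpr hk972, by norm_num⟩
      have h2 : ¬ 27 ∣ k.natAbs := fun h => hk27 (by simpa using Int.natCast_dvd.mpr h)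
      have h3 : ∀ t ∈ Nat.divisors 972, ¬ 27 ∣ t → t ≤ 36 := by decide +kernel
      have := h3 _ h1 h2
      rw [Int.abs_eq_natAbs]
      exact_mod_cast this
    have hK : |a| ≤ 36 * ht u' ∧ |b| ≤ 36 * ht u' := by
      rw [hka, hkb, abs_mul, abs_mul]
      exact ⟨mul_le_mul hk36 (num_le_ht _) (abs_nonneg _) (by norm_num),
        mul_le_mul hk36 (den_le_ht _) (abs_nonneg _) (by norm_num)⟩
    set K := 36 * ht u'
    have g0 := abs_le.mp (mono3 0 (by norm_num))
    have g1 := abs_le.mp (mono3 1 (by norm_num))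
    have g2 := abs_le.mp (mono3 2 (by norm_num))
    have g3 := abs_le.mp (mono3 3 (by norm_num))
    norm_num at g0 g1 g2 g3
    have hM3 : 0 < M ^ 3 := by positivity
    have bnd : ∀ f g A B : ℤ, |f| ≤ A * M ^ 3 → |g| ≤ B * M ^ 3 →
        |f * a + g * b| ≤ (A + B) * (M ^ 3 * K) := fun f g A B hf hg => by
      refine (abs_add_le _ _).trans ?_
      rw [abs_mul f, abs_mul g]
      have i1 : |f| * |a| ≤ A * M ^ 3 * K :=
        mul_le_mul hf hK.1 (abs_nonneg _) ((abs_nonneg _).trans hf)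
      have i2 : |g| * |b| ≤ B * M ^ 3 * K :=
        mul_le_mul hg hK.2 (abs_nonneg _) ((abs_nonneg _).trans hg)
      linarith
    have b1 : |n| ^ 7 ≤ 153 * (M ^ 3 * K) := by
      rw [← abs_pow, ← key1]
      refine bnd _ _ 85 68 ?_ ?_ <;> rw [abs_le] <;>
        constructor <;> nlinarith only [g0, g1, g2, g3]
    have b2 : |d| ^ 7 ≤ 153 * (M ^ 3 * K) := by
      have : 972 * |d| ^ 7 ≤ 101 * (M ^ 3 * K) := by
        rw [← abs_pow, show (972 : ℤ) * |d ^ 7| = |972 * d ^ 7| by rw [abs_mul]; rfl, ← key2]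
        refine bnd _ _ 40 61 ?_ ?_ <;> rw [abs_le] <;>
          constructor <;> nlinarith only [g0, g1, g2, g3]
      have : 0 ≤ |d| ^ 7 := by positivity
      linarith
    have b3 : M ^ 7 ≤ 153 * (M ^ 3 * K) := by
      rcases max_choice |n| |d| with h' | h'
      · rwa [← hM.trans h'] at b1
      · rwa [← hM.trans h'] at b2
    refine le_of_mul_le_mul_left ?_ hM3
    calc M ^ 3 * M ^ 4 = M ^ 7 := by ring
      _ ≤ _ := b3
      _ = _ := by ring

/-! ### The canonical height on the elliptic curve -/

/-- The naive logarithmic height (to base two) on `curveE`, through the first coordinate. -/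
noncomputable def nh : curveE.Point → ℝ
  | .zero => 0
  | .some u _ _ => Real.logb 2 (ht u)

theorem nh_zero : nh 0 = 0 := rfl

theorem nh_pt {u v : ℚ} (h : OnE u v) : nh (pt u v h) = Real.logb 2 (ht u) := rfl

theorem ht_pos (u : ℚ) : (0 : ℝ) < ht u := by
  have := one_le_ht u
  exact_mod_cast (by linarith : 0 < ht u)

theorem nh_nonneg (P : curveE.Point) : 0 ≤ nh P := by
  rcases pt_cases P with rfl | ⟨u, v, h, rfl⟩
  · exact nh_zero.ge
  · rw [nh_pt]
    exact Real.logb_nonneg one_lt_two (by exact_mod_cast one_le_ht u)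

theorem nh_neg (P : curveE.Point) : nh (-P) = nh P := by
  rcases pt_cases P with rfl | ⟨u, v, h, rfl⟩
  · rw [neg_zero]
  · rw [pt_neg, nh_pt, nh_pt]

theorem OnE.cubic_ne_zero {u v : ℚ} (h : OnE u v) : u ^ 3 + 9 * (u + 1) ^ 2 ≠ 0 := by
  have h' := h
  unfold OnE at h'
  rw [← h']
  exact pow_ne_zero 2 h.v_ne_zero

/-- Explicit duplication of an affine point. -/
theorem exists_dbl {u v : ℚ} (h : OnE u v) : ∃ u' v' h', pt u v h + pt u v h = pt u' v' h' ∧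
    u' * (4 * (u ^ 3 + 9 * (u + 1) ^ 2)) = u * (u ^ 3 - 36 * u - 72) := by
  have hv := h.v_ne_zero
  have hl : (3 * u ^ 2 + 18 * u + 18) / (2 * v) * (2 * v) = 3 * u ^ 2 + 18 * u + 18 :=
    div_mul_cancel₀ _ (by simpa using hv)
  obtain ⟨h₃, e⟩ := pt_dbl h hv _ hl rfl rfl
  exact ⟨_, _, h₃, e, dbl_coord h hl rfl⟩

theorem nh_dbl (P : curveE.Point) : nh (P + P) ≤ 4 * nh P + 9 ∧ 4 * nh P - 13 ≤ nh (P + P) := by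
  rcases pt_cases P with rfl | ⟨u, v, h, rfl⟩
  · rw [add_zero, nh_zero]
    norm_num
  · obtain ⟨u', v', h', e, hc⟩ := exists_dbl h
    obtain ⟨h1, h2⟩ := dbl_ht h.cubic_ne_zero hc
    have hp := ht_pos u
    have hp' := ht_pos u'
    have e1 : (ht u' : ℝ) ≤ 2 ^ (9 : ℝ) * ht u ^ 4 := by
      have : (ht u' : ℝ) ≤ 148 * ht u ^ 4 := by exact_mod_cast h1
      have h4 : (0 : ℝ) < ht u ^ 4 := by positivity
      norm_num
      linarith
    have e2 : (ht u : ℝ) ^ 4 ≤ 2 ^ (13 : ℝ) * ht u' := by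
      have : (ht u : ℝ) ^ 4 ≤ 5508 * ht u' := by exact_mod_cast h2
      norm_num
      linarith
    rw [e, nh_pt, nh_pt]
    constructor
    · have := Real.logb_le_logb_of_le one_lt_two hp' e1
      rw [Real.logb_mul (by positivity) (by positivity), Real.logb_rpow two_pos (by norm_num),
        Real.logb_pow] at this
      push_cast at this
      linarith
    · have := Real.logb_le_logb_of_le one_lt_two (by positivity) e2
      rw [Real.logb_mul (by positivity) (by positivity), Real.logb_rpow two_pos (by norm_num),
        Real.logb_pow] at this
      push_cast at this
      linarith

/-- One half of the parallelogram law; the other half holds only in the limit. -/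
theorem nh_parallelogram (P R : curveE.Point) :
    nh (P + R) + nh (P - R) ≤ 2 * nh P + 2 * nh R + 9 := by
  rcases pt_cases P with rfl | ⟨u₁, v₁, h₁, rfl⟩
  · rw [zero_add, zero_sub, nh_neg, nh_zero]
    linarith [nh_nonneg R]
  rcases pt_cases R with rfl | ⟨u₂, v₂, h₂, rfl⟩
  · rw [add_zero, sub_zero, nh_zero]
    linarith [nh_nonneg (pt u₁ v₁ h₁)]
  by_cases hne : u₁ = u₂
  · subst hne
    have hv : v₁ = v₂ ∨ v₁ = -v₂ := by
      rw [← sq_eq_sq_iff_eq_or_eq_neg]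
      exact h₁.trans h₂.symm
    rcases hv with rfl | rfl
    · rw [sub_self, nh_zero]
      linarith [(nh_dbl (pt u₁ v₁ h₁)).1]
    · rw [← pt_neg h₂, neg_add_cancel, nh_zero, nh_neg, ← nh_neg, neg_sub, sub_neg_eq_add]
      linarith [(nh_dbl (pt u₁ v₂ h₂)).1]
  · have hs := sub_ne_zero.mpr hne
    have hl : (v₁ - v₂) / (u₁ - u₂) * (u₁ - u₂) = v₁ - v₂ := div_mul_cancel₀ _ hs
    have hl' : (v₁ + v₂) / (u₁ - u₂) * (u₁ - u₂) = v₁ + v₂ := div_mul_cancel₀ _ hs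
    have hl'' : (v₁ + v₂) / (u₁ - u₂) * (u₁ - u₂) = v₁ - -v₂ := by rw [hl']; ring
    obtain ⟨u₃, hu₃⟩ : ∃ u₃, u₃ = ((v₁ - v₂) / (u₁ - u₂)) ^ 2 - 9 - u₁ - u₂ := ⟨_, rfl⟩
    obtain ⟨u₄, hu₄⟩ : ∃ u₄, u₄ = ((v₁ + v₂) / (u₁ - u₂)) ^ 2 - 9 - u₁ - u₂ := ⟨_, rfl⟩
    obtain ⟨h₃, e₃⟩ := pt_add h₁ h₂ hne _ hl hu₃ rfl
    obtain ⟨h₄, e₄⟩ := pt_add h₁ h₂.neg hne _ hl'' hu₄ rfl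
    have key := chord_ht h₁ h₂ hne _ _ hl hl' hu₃ hu₄
    rw [sub_eq_add_neg, pt_neg, e₃, e₄, nh_pt, nh_pt, nh_pt, nh_pt]
    have p₁ := ht_pos u₁
    have p₂ := ht_pos u₂
    have p₃ := ht_pos u₃
    have p₄ := ht_pos u₄
    have e : (ht u₃ : ℝ) * ht u₄ ≤ 2 ^ (9 : ℝ) * (ht u₁ * ht u₂) ^ 2 := by
      have h1 : (ht u₃ : ℝ) * ht u₄ ≤ 296 * (ht u₁ * ht u₂) ^ 2 := by exact_mod_cast key
      have h2 : (0 : ℝ) < (ht u₁ * ht u₂) ^ 2 := by positivity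
      norm_num
      linarith
    have := Real.logb_le_logb_of_le one_lt_two (by positivity) e
    rw [Real.logb_mul (by positivity) (by positivity), Real.logb_mul (by positivity) (by positivity),
      Real.logb_rpow two_pos (by norm_num), Real.logb_pow,
      Real.logb_mul (by positivity) (by positivity)] at this
    push_cast at this
    linarith

/-- A canonical height on `curveE`, with explicit comparison to the naive one. -/
theorem exists_height : ∃ H : curveE.Point → ℝ,
    (∀ P R, H (P + R) + H (P - R) = 2 * H P + 2 * H R) ∧
    (∀ P, nh P - 13 / 3 ≤ H P) ∧ (∀ P, H P ≤ nh P + 3) := by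
  obtain ⟨H, h1, h2, h3⟩ := exists_canonical_height nh 9 13 nh_zero nh_nonneg nh_parallelogram
    (fun P => (nh_dbl P).2)
  refine ⟨H, h1, h2, fun P => ?_⟩
  linarith [h3 P]

/-! ### Cubes in the Eisenstein integers -/

/-- The ring of Eisenstein integers `ℤ[ω]`, `ω² = -1 - ω`. -/
abbrev Eis : Type := QuadraticAlgebra ℤ (-1) (-1)

namespace Eis

/-- The norm `a² - ab + b²` of `a + bω`. -/
def nrm (z : Eis) : ℤ := z.re ^ 2 - z.re * z.im + z.im ^ 2

theorem nrm_mul (x y : Eis) : nrm (x * y) = nrm x * nrm y := by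
  simp only [nrm, QuadraticAlgebra.re_mul, QuadraticAlgebra.im_mul]
  ring

theorem nrm_nonneg (z : Eis) : 0 ≤ nrm z := by
  unfold nrm
  nlinarith [sq_nonneg (2 * z.re - z.im), sq_nonneg z.im]

theorem nrm_eq_zero {z : Eis} (h : nrm z = 0) : z = 0 := by
  unfold nrm at h
  have h1 : z.im = 0 := by
    have : z.im ^ 2 = 0 := by nlinarith [sq_nonneg (2 * z.re - z.im), sq_nonneg z.im]
    simpa using this
  have h2 : z.re = 0 := by simpa [h1] using h
  ext <;> simp [h1, h2]

theorem nrm_pos {z : Eis} (h : z ≠ 0) : 0 < nrm z :=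
  lt_of_le_of_ne (nrm_nonneg z) fun h' => h (nrm_eq_zero h'.symm)

/-- Nearest-integer division. -/
def rdiv (p n : ℤ) : ℤ := (2 * p + n) / (2 * n)

theorem rdiv_spec (p : ℤ) {n : ℤ} (hn : 0 < n) : |2 * (p - n * rdiv p n)| ≤ n := by
  unfold rdiv
  have h1 := Int.emod_nonneg (2 * p + n) (by positivity : 2 * n ≠ 0)
  have h2 := Int.emod_lt_of_pos (2 * p + n) (by positivity : 0 < 2 * n)
  have h3 := Int.mul_ediv_add_emod (2 * p + n) (2 * n)
  rw [abs_le]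
  constructor <;> linarith

/-- Division with remainder of smaller norm: divide coordinatewise to the nearest integer. -/
def quo (x y : Eis) : Eis := ⟨rdiv (x * star y).re (nrm y), rdiv (x * star y).im (nrm y)⟩

theorem nrm_rem_lt (x : Eis) {y : Eis} (hy : y ≠ 0) : nrm (x - y * quo x y) < nrm y := by
  have hn := nrm_pos hy
  have h1 := rdiv_spec (x * star y).re hn
  have h2 := rdiv_spec (x * star y).im hn
  have hstar : nrm (star y) = nrm y := by
    simp only [nrm, QuadraticAlgebra.re_star, QuadraticAlgebra.im_star]
    ring
  have key : nrm (x - y * quo x y) * nrm y = nrm (⟨(x * star y).re - nrm y * (quo x y).re,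
      (x * star y).im - nrm y * (quo x y).im⟩ : Eis) := by
    rw [← hstar, ← nrm_mul, hstar]
    congr 1
    ext <;> simp only [nrm, QuadraticAlgebra.re_star, QuadraticAlgebra.im_star,
      QuadraticAlgebra.re_mul, QuadraticAlgebra.im_mul, QuadraticAlgebra.re_sub,
      QuadraticAlgebra.im_sub] <;> ring
  change |2 * ((x * star y).re - nrm y * (quo x y).re)| ≤ _ at h1
  change |2 * ((x * star y).im - nrm y * (quo x y).im)| ≤ _ at h2
  generalize (x * star y).re - nrm y * (quo x y).re = a at *
  generalize (x * star y).im - nrm y * (quo x y).im = b at *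
  rw [abs_le] at h1 h2
  have h3 : 4 * nrm (⟨a, b⟩ : Eis) ≤ 3 * nrm y ^ 2 := by
    simp only [nrm] at *
    nlinarith [mul_nonneg (sub_nonneg.mpr h1.2) (sub_nonneg.mpr h2.2), mul_nonneg (sub_nonneg.mpr h1.1) (sub_nonneg.mpr h2.1), mul_nonneg (sub_nonneg.mpr h1.2) (sub_nonneg.mpr h1.1), mul_nonneg (sub_nonneg.mpr h2.2) (sub_nonneg.mpr h2.1)]
  rw [← key] at h3
  by_contra! hcon
  nlinarith

instance : Nontrivial Eis := ⟨⟨0, 1, fun h => by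
  have := congrArg QuadraticAlgebra.re h
  rw [QuadraticAlgebra.re_one] at this
  exact absurd this (by decide)⟩⟩

noncomputable instance : EuclideanDomain Eis where
  quotient := fun x y => if y = 0 then 0 else quo x y
  quotient_zero := by simp
  remainder := fun x y => if y = 0 then x else x - y * quo x y
  quotient_mul_add_remainder_eq := fun x y => by
    by_cases h : y = 0 <;> simp [h]
  r := fun x y => nrm x < nrm y
  r_wellFounded := by
    refine (measure fun z : Eis => (nrm z).toNat).wf.mono ?_
    intro x y h
    have := nrm_nonneg x
    change (nrm x).toNat < (nrm y).toNat
    omega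
  remainder_lt := fun x y h => by
    simpa [h] using nrm_rem_lt x h
  mul_left_not_lt := fun x y h => by
    rw [nrm_mul, not_lt]
    have := nrm_pos h
    nlinarith [nrm_nonneg x]

end Eis

/-- If `C² - CD + D²` is a cube with `C, D` coprime and `3 ∣ D`, then `C + Dω` is a cube. -/
theorem eisenstein_cube {C D m : ℤ} (h : C ^ 2 - C * D + D ^ 2 = m ^ 3) (hc : IsCoprime C D)
    (h3 : 3 ∣ D) : ∃ f g : ℤ, C = f ^ 3 + g ^ 3 - 3 * f * g ^ 2 ∧ D = 3 * f * g * (f - g) ∧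
      m = f ^ 2 - f * g + g ^ 2 := by
  have h3C : ¬ (3 : ℤ) ∣ C := fun h' => absurd (hc.isUnit_of_dvd' h' h3) (by decide)
  have h3m : IsCoprime (3 : ℤ) (m ^ 3) := by
    rw [Int.prime_three.coprime_iff_not_dvd, ← h]
    intro h'
    refine h3C (Int.prime_three.dvd_of_dvd_pow (n := 2) ?_)
    have : C ^ 2 = C ^ 2 - C * D + D ^ 2 + D * (C - D) := by ring
    rw [this]
    exact h'.add (h3.mul_right _)
  obtain ⟨s, t, hst⟩ := h3m
  obtain ⟨x, y, hxy⟩ := hc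
  -- the ideal generated by `α` and its conjugate contains `3C`, `3D` and `m³`
  have hcop : IsCoprime (⟨C, D⟩ : Eis) ⟨C - D, -D⟩ := by
    refine ⟨⟨s * (x - y) + t * (C - D), s * (-x - 2 * y) - t * D⟩,
      ⟨s * (2 * x + y), s * (x + 2 * y)⟩, ?_⟩
    ext
    · rw [QuadraticAlgebra.re_add, QuadraticAlgebra.re_mul, QuadraticAlgebra.re_mul,
        QuadraticAlgebra.re_one]
      linear_combination 3 * s * hxy + hst + t * h
    · rw [QuadraticAlgebra.im_add, QuadraticAlgebra.im_mul, QuadraticAlgebra.im_mul,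
        QuadraticAlgebra.im_one]
      ring
  have hprod : (⟨C, D⟩ : Eis) * ⟨C - D, -D⟩ = ⟨m, 0⟩ ^ 3 := by
    rw [pow_three, QuadraticAlgebra.mk_mul_mk, QuadraticAlgebra.mk_mul_mk,
      QuadraticAlgebra.mk_mul_mk]
    ext
    · linear_combination h
    · ring
  let _ : GCDMonoid Eis := EuclideanDomain.gcdMonoid _
  obtain ⟨γ, u, hu⟩ := exists_associated_pow_of_mul_eq_pow' hcop hprod
  obtain ⟨f, g⟩ := γ
  have hun : Eis.nrm (u : Eis) = 1 := by
    have h1 := Eis.nrm_mul (u : Eis) (↑u⁻¹ : Eis)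
    rw [Units.mul_inv] at h1
    have h2 : Eis.nrm 1 = 1 := by
      rw [Eis.nrm, QuadraticAlgebra.re_one, QuadraticAlgebra.im_one]; norm_num
    rw [h2] at h1
    exact Int.eq_one_of_mul_eq_one_right (Eis.nrm_nonneg _) h1.symm
  have hm : (f ^ 2 - f * g + g ^ 2) ^ 3 = m ^ 3 := by
    have h1 := congrArg Eis.nrm hu
    rw [Eis.nrm_mul, hun, mul_one, pow_three, Eis.nrm_mul, Eis.nrm_mul] at h1
    simp only [Eis.nrm] at h1
    rw [← h, ← h1]
    ring
  have hm' : m = f ^ 2 - f * g + g ^ 2 :=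
    (Odd.strictMono_pow (R := ℤ) (by decide : Odd 3)).injective hm.symm
  generalize (u : Eis) = w at hu hun
  obtain ⟨p, q⟩ := w
  rw [pow_three, QuadraticAlgebra.mk_mul_mk, QuadraticAlgebra.mk_mul_mk,
    QuadraticAlgebra.mk_mul_mk] at hu
  have hre := congrArg QuadraticAlgebra.re hu
  have him := congrArg QuadraticAlgebra.im hu
  simp only [Eis.nrm] at hun hre him
  have hq : q ^ 2 ≤ 1 := by nlinarith [sq_nonneg (2 * p - q)]
  have hp : p ^ 2 ≤ 1 := by nlinarith [sq_nonneg (2 * q - p)]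
  have hq1 : -1 ≤ q ∧ q ≤ 1 := abs_le.mp (abs_le_one_iff_mul_self_le_one.mpr (by linarith))
  have hp1 : -1 ≤ p ∧ p ≤ 1 := abs_le.mp (abs_le_one_iff_mul_self_le_one.mpr (by linarith))
  obtain hq0 | hq0 : q = 0 ∨ q ^ 2 = 1 := by
    obtain ⟨hq1, hq2⟩ := hq1
    interval_cases q <;> simp
  · subst hq0
    have hp0 : (p - 1) * (p + 1) = 0 := by linear_combination hun
    rcases mul_eq_zero.mp hp0 with h' | h'
    · obtain rfl : p = 1 := by linarith
      exact ⟨f, g, by linarith, by linarith, hm'⟩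
    · obtain rfl : p = -1 := by linarith
      exact ⟨-f, -g, by linarith, by linarith, by rw [hm']; ring⟩
  · -- the units other than `±1` would force `3 ∣ C`
    refine absurd ?_ h3C
    obtain ⟨z, hz⟩ := h3
    refine ⟨p * q * z - p * q * (p - q) * (f * g * (f - g)) - f * g * (f - g) * q, ?_⟩
    linear_combination -hre + p * q * (him + hz) - p * (f ^ 3 + g ^ 3 - 3 * f * g ^ 2) * hq0

/-! ### Explicit triplication -/

/-- Explicit triplication: for `S = (u, V)` the point `-3S` has coordinates
`-(p² - q²V²)/(9u²m²)` and `qV(3p² + q²V²)/(27u³m³)`. The quantity `3um`, up to a constant, is the third division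
polynomial. -/
theorem neg_triple {u V F m p q : ℚ} (h : OnE u V) (hF : F = u ^ 3 + 9 * (u + 1) ^ 2)
    (hm : m = 3 * (u + 3) ^ 2 + F) (hp : p = 9 * u ^ 3 - 3 * u * m) (hq : q = 9 * (u + 3) ^ 2 - F)
    (hu0 : u ≠ 0) (hm0 : m ≠ 0) {uP vP : ℚ} (hP : OnE uP vP)
    (huP : uP = -(p ^ 2 - q ^ 2 * F) / (9 * u ^ 2 * m ^ 2))
    (hvP : vP = q * V * (3 * p ^ 2 + q ^ 2 * F) / (27 * u ^ 3 * m ^ 3)) :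
    pt uP vP hP = -(pt u V h + (pt u V h + pt u V h)) := by
  have hV := h.v_ne_zero
  have hVF : V ^ 2 = F := by rw [hF]; exact h
  have hF0 : F ≠ 0 := by rw [← hVF]; exact pow_ne_zero 2 hV
  set L := 3 * u ^ 2 + 18 * u + 18 with hL
  set N := 16 * F ^ 2 - 3 * u * m * L with hN
  obtain ⟨u₂, hu₂⟩ : ∃ u₂, u₂ = u - 3 * u * m / (4 * F) := ⟨_, rfl⟩
  obtain ⟨v₂, hv₂⟩ : ∃ v₂, v₂ = -(V + L / (2 * V) * (u₂ - u)) := ⟨_, rfl⟩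
  obtain ⟨h₂, e₂⟩ := pt_dbl (u₃ := u₂) (v₃ := v₂) h hV (L / (2 * V))
    (by rw [div_mul_cancel₀ _ (mul_ne_zero two_ne_zero hV), hL])
    (by
      rw [hu₂, div_pow, mul_pow, hVF]
      field_simp
      rw [hL, hm, hF]
      ring) hv₂
  have hne : u ≠ u₂ := by
    rw [hu₂]
    intro h'
    have : 3 * u * m / (4 * F) = 0 := by linarith
    simp [hu0, hm0, hF0] at this
  obtain ⟨h₃, e₃⟩ := pt_add (u₃ := uP) (v₃ := -vP) h h₂ hne (N / (6 * u * m * V))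
    (by
      rw [hv₂, hu₂, hN, ← hVF]
      field_simp
      ring)
    (by
      rw [hu₂, huP, div_pow, mul_pow, hVF, hN]
      field_simp
      rw [hp, hq, hL, hm, hF]
      ring)
    (by
      have e : N / (6 * u * m * V) = N * V / (6 * u * m * F) := by
        rw [← hVF]
        field_simp
      rw [e, hvP, huP, hN]
      field_simp
      rw [hp, hq, hL, hm, hF]
      ring)
  rw [e₂, e₃, pt_neg]
  simp

/-! ### The integral cubic of the descent -/

/-- An integer prime whose square divides `6 n³` divides `n`, since `6` is squarefree. -/
theorem prime_dvd_of_sq_dvd {p n : ℤ} (hp : Prime p) (h : p ^ 2 ∣ 6 * n ^ 3) : p ∣ n := by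
  by_contra hn
  have h6 : p ^ 2 ∣ 6 := by
    have : IsCoprime (p ^ 2) (n ^ 3) := ((Prime.coprime_iff_not_dvd hp).mpr hn).pow
    exact this.dvd_of_dvd_mul_right h
  have hsix : p.natAbs ^ 2 ∣ 6 := by
    have := Int.natAbs_dvd_natAbs.mpr h6
    rwa [Int.natAbs_pow] at this
  have h2 := (Int.prime_iff_natAbs_prime.mp hp).two_le
  have h3 : p.natAbs ^ 2 ≤ 6 := Nat.le_of_dvd (by norm_num) hsix
  have h4 : p.natAbs = 2 := by nlinarith
  rw [h4] at hsix
  norm_num at hsix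

/-- Parametrisation of the coprime solutions of `A³ + B³ + 6ABe = 6e³` by the integral points of
`fg(f - g) = 2h(f² - fg + g² - h²)`. With `e = 3ε`, `A + 2e = C + D` and `B + 2e = 2D - C` the
equation becomes `(D - 6ε)(C² - CD + D²) = -6ε³` with coprime `C, D` and `6 ∣ D`. -/
theorem cubic_descent {A B e : ℤ} (he : e ≠ 0) (hAB : IsCoprime A B)
    (h : A ^ 3 + B ^ 3 + 6 * A * B * e = 6 * e ^ 3) :
    ∃ f g h m : ℤ, m = f ^ 2 - f * g + g ^ 2 ∧ h ≠ 0 ∧ m ≠ 0 ∧ e = 3 * h * m ∧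
      f * g * (f - g) = 2 * h * (m - h ^ 2) ∧
      A = f ^ 3 + g ^ 3 - 3 * f * g ^ 2 + 3 * f * g * (f - g) - 2 * e ∧
      B = 2 * (3 * f * g * (f - g)) - (f ^ 3 + g ^ 3 - 3 * f * g ^ 2) - 2 * e := by
  have p3 : Prime (3 : ℤ) := Int.prime_three
  have p2 : Prime (2 : ℤ) := Int.prime_two
  have h3A : ¬ ((3 : ℤ) ∣ A ∧ (3 : ℤ) ∣ B) := fun ⟨ha, hb⟩ =>
    p3.not_isUnit (hAB.isUnit_of_dvd' ha hb)
  obtain ⟨s, hs⟩ : (3 : ℤ) ∣ A + B := by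
    refine p3.dvd_of_dvd_pow (n := 3) ⟨A * B * (A + B) + 2 * e ^ 3 - 2 * A * B * e, ?_⟩
    linear_combination h
  obtain rfl : A = 3 * s - B := by linarith
  obtain ⟨ε, rfl⟩ : (3 : ℤ) ∣ e := by
    have h9 : (3 : ℤ) ∣ e * (2 * e ^ 2 + 2 * B ^ 2) :=
      ⟨3 * s ^ 3 - 3 * s ^ 2 * B + s * B ^ 2 + 2 * s * B * e, mul_left_cancel₀ (show (3 : ℤ) ≠ 0 by norm_num) (by linear_combination -h)⟩
    rcases p3.dvd_or_dvd h9 with h' | h'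
    · exact h'
    · by_contra hne
      have hB : ¬ (3 : ℤ) ∣ B := fun hb => h3A ⟨by omega, hb⟩
      have key : (2 * e ^ 2 + 2 * B ^ 2) % 3 ≠ 0 := by
        have c1 : e % 3 = 1 ∨ e % 3 = 2 := by omega
        have c2 : B % 3 = 1 ∨ B % 3 = 2 := by omega
        rcases c1 with c1 | c1 <;> rcases c2 with c2 | c2 <;>
          simp [pow_two, Int.add_emod, Int.mul_emod, c1, c2]
      exact key (Int.emod_eq_zero_of_dvd h')
  have hε : ε ≠ 0 := by rintro rfl; simp at he
  obtain ⟨D, hD⟩ : ∃ D, D = s + 4 * ε := ⟨_, rfl⟩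
  obtain ⟨C, hC⟩ : ∃ C, C = 2 * s - B + 2 * ε := ⟨_, rfl⟩
  obtain ⟨M, hM⟩ : ∃ M, M = C ^ 2 - C * D + D ^ 2 := ⟨_, rfl⟩
  have hmain : (D - 6 * ε) * M = -(6 * ε ^ 3) := by
    rw [hM, hC, hD]
    refine mul_left_cancel₀ (show (9 : ℤ) ≠ 0 by norm_num) ?_
    linear_combination h
  have hCD : IsCoprime C D := by
    refine isCoprime_of_prime_dvd ?_ ?_
    · rintro ⟨h1, h2⟩
      rw [h1, h2] at hM
      simp [hM] at hmain
      exact hε hmain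
    · rintro p hp ⟨c, hc⟩ ⟨d, hd⟩
      have hpε : p ∣ ε := prime_dvd_of_sq_dvd hp
        ⟨-((D - 6 * ε) * (c ^ 2 - c * d + d ^ 2)), by
          rw [hM, hc, hd] at hmain
          rw [hd]
          linear_combination hmain⟩
      obtain ⟨k, hk⟩ := hpε
      exact hp.not_isUnit (hAB.isUnit_of_dvd' (x := p) ⟨c + d - 6 * k, by rw [hk] at hC hD; linarith⟩
        ⟨2 * d - c - 6 * k, by rw [hk] at hC hD; linarith⟩)
  have h3M : ¬ (3 : ℤ) ∣ M := by
    rintro ⟨k, hk⟩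
    have : (3 : ℤ) ∣ C + D := p3.dvd_of_dvd_pow (n := 2)
      ⟨k + C * D, by linear_combination hk - hM⟩
    exact h3A ⟨by omega, by omega⟩
  have h3D : (3 : ℤ) ∣ D := by
    have : (3 : ℤ) ∣ (D - 6 * ε) * M := ⟨-(2 * ε ^ 3), by rw [hmain]; ring⟩
    rcases p3.dvd_or_dvd this with h' | h'
    · omega
    · exact absurd h' h3M
  have h2M : ¬ (2 : ℤ) ∣ M := by
    intro h'
    have hn : ¬ ((2 : ℤ) ∣ C ∧ (2 : ℤ) ∣ D) := fun ⟨ha, hb⟩ =>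
      p2.not_isUnit (hCD.isUnit_of_dvd' ha hb)
    have c1 : C % 2 = 0 ∨ C % 2 = 1 := by omega
    have c2 : D % 2 = 0 ∨ D % 2 = 1 := by omega
    have h'' := Int.emod_eq_zero_of_dvd h'
    rw [hM] at h''
    rcases c1 with c1 | c1 <;> rcases c2 with c2 | c2
    · exact hn ⟨by omega, by omega⟩
    all_goals simp [pow_two, Int.add_emod, Int.sub_emod, Int.mul_emod, c1, c2] at h''
  have h2D : (2 : ℤ) ∣ D := by
    have : (2 : ℤ) ∣ (D - 6 * ε) * M := ⟨-(3 * ε ^ 3), by rw [hmain]; ring⟩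
    rcases p2.dvd_or_dvd this with h' | h'
    · omega
    · exact absurd h' h2M
  obtain ⟨δ, hδ⟩ : (6 : ℤ) ∣ D := by omega
  have hprod : (ε - δ) * M = ε ^ 3 := by
    rw [hδ] at hmain
    linarith
  have hcop : IsCoprime (ε - δ) M := by
    refine isCoprime_of_prime_dvd ?_ ?_
    · rintro ⟨h1, h2⟩
      exact h2M (h2 ▸ dvd_zero 2)
    · intro p hp h1 h2
      have e1 : p ∣ ε := hp.dvd_of_dvd_pow (n := 3) (hprod ▸ dvd_mul_of_dvd_left h1 M)
      have e2 : p ∣ D := by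
        rw [hδ]
        exact dvd_mul_of_dvd_right ((dvd_sub_right e1).mp h1) 6
      have e3 : p ∣ C := by
        refine hp.dvd_of_dvd_pow (n := 2) ?_
        have : C ^ 2 = M + D * (C - D) := by rw [hM]; ring
        rw [this]
        exact dvd_add h2 (dvd_mul_of_dvd_left e2 _)
      exact hp.not_isUnit (hCD.isUnit_of_dvd' e3 e2)
  obtain ⟨⟨η, hη⟩, ⟨m, hm⟩⟩ := Int.eq_pow_of_mul_eq_pow_odd hcop (by decide : Odd 3) hprod
  have hεηm : ε = η * m := by
    rw [hη, hm, ← mul_pow] at hprod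
    exact ((Odd.strictMono_pow (by decide : Odd 3)).injective hprod).symm
  obtain ⟨f, g, hf, hg, hfg⟩ := eisenstein_cube (hM.symm.trans hm) hCD h3D
  refine ⟨f, g, η, m, hfg, ?_, ?_, ?_, ?_, ?_, ?_⟩
  · rintro rfl
    simp [hεηm] at hε
  · rintro rfl
    simp [hεηm] at hε
  · rw [hεηm]; ring
  · have : 3 * (f * g * (f - g)) = 6 * (η * m - η ^ 3) := by
      rw [← hεηm, ← hη]
      linarith
    linarith
  · rw [← hf, ← hg]; linarith
  · rw [← hf, ← hg]; linarith

/-! ### Points in the trivial class -/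

/-- A point on `a³ + b³ + 6ab = 6` has a representation with a common denominator and coprime
numerators. -/
theorem exists_coprime_rep {a b : ℚ} (h : a ^ 3 + b ^ 3 + 6 * a * b = 6) :
    ∃ A B e : ℤ, e ≠ 0 ∧ a * e = A ∧ b * e = B ∧ IsCoprime A B ∧
      A ^ 3 + B ^ 3 + 6 * A * B * e = 6 * e ^ 3 := by
  classical
  have hex : ∃ n : ℕ, ∃ A B e : ℤ, e.natAbs = n ∧ e ≠ 0 ∧ a * e = A ∧ b * e = B := by
    refine ⟨_, a.num * b.den, b.num * a.den, a.den * b.den, rfl, ?_, ?_, ?_⟩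
    · exact_mod_cast mul_ne_zero a.den_ne_zero b.den_ne_zero
    · push_cast
      rw [← mul_assoc, Rat.mul_den_eq_num]
    · push_cast
      rw [mul_left_comm, Rat.mul_den_eq_num, mul_comm]
  obtain ⟨A, B, e, hn, he, hA, hB⟩ := Nat.find_spec hex
  have heq : A ^ 3 + B ^ 3 + 6 * A * B * e = 6 * e ^ 3 := by
    have : (A : ℚ) ^ 3 + B ^ 3 + 6 * A * B * e = 6 * e ^ 3 := by
      rw [← hA, ← hB]
      linear_combination (e : ℚ) ^ 3 * h
    exact_mod_cast this
  refine ⟨A, B, e, he, hA, hB, isCoprime_of_prime_dvd ?_ ?_, heq⟩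
  · rintro ⟨rfl, rfl⟩
    simp at heq
    exact he heq
  · rintro p hp ⟨x, rfl⟩ ⟨y, rfl⟩
    obtain ⟨k, rfl⟩ : p ∣ e := prime_dvd_of_sq_dvd hp
      ⟨p * x ^ 3 + p * y ^ 3 + 6 * x * y * e, by rw [← heq]; ring⟩
    have hp0 : (p : ℚ) ≠ 0 := by exact_mod_cast hp.ne_zero
    refine Nat.find_min hex (m := k.natAbs) ?_ ⟨x, y, k, rfl, ?_, ?_, ?_⟩
    · rw [← hn, Int.natAbs_mul]
      have h2 := (Int.prime_iff_natAbs_prime.mp hp).two_le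
      have h3 : 0 < k.natAbs := Int.natAbs_pos.mpr (right_ne_zero_of_mul he)
      nlinarith
    · exact right_ne_zero_of_mul he
    · refine mul_left_cancel₀ hp0 ?_
      push_cast at hA
      linear_combination hA
    · refine mul_left_cancel₀ hp0 ?_
      push_cast at hB
      linear_combination hB

/-- A point at which the function `V - 3(U + 1)`, whose divisor is `3(T) - 3(O)`, is a cube is a
multiple of three. With `V - 3(U + 1) = t³` and `V + 3(U + 1) = s³` one has `U = st`, and
`(s, -t)` lies on `a³ + b³ + 6ab = 6`. -/
theorem eq_neg_triple_of_cube {u v t : ℚ} (h : OnE u v) (hu : u ≠ 0)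
    (ht : v - 3 * (u + 1) = t ^ 3) :
    ∃ S : curveE.Point, pt u v h = -(S + (S + S)) := by
  have hv : v ^ 2 = u ^ 3 + 9 * (u + 1) ^ 2 := h
  have ht0 : t ≠ 0 := by
    rintro rfl
    have : u ^ 3 = 0 := by linear_combination -hv + (v + 3 * (u + 1)) * ht
    exact hu (pow_eq_zero_iff (by norm_num) |>.mp this)
  obtain ⟨s, hs⟩ : ∃ s, s = u / t := ⟨_, rfl⟩
  have hst : u = s * t := by rw [hs]; field_simp
  have hs3 : v + 3 * (u + 1) = s ^ 3 := by
    have h3 : t ^ 3 ≠ 0 := pow_ne_zero 3 ht0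
    refine mul_right_cancel₀ h3 ?_
    rw [← mul_pow, ← hst, ← ht]
    linear_combination hv
  have hcub : s ^ 3 + (-t) ^ 3 + 6 * s * (-t) = 6 := by
    linear_combination -hs3 + ht + 6 * hst
  obtain ⟨A, B, e, he, hA, hB, hAB, hABe⟩ := exists_coprime_rep hcub
  obtain ⟨f, g, η, m, hm, hη, hm0, heq, hrel, hAf, hBf⟩ := cubic_descent he hAB hABe
  have hr : (f + 2 * η : ℚ) ≠ 0 := by
    intro h'
    have h'' : f = -2 * η := by
      have : f + 2 * η = 0 := by exact_mod_cast h'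
      linarith
    have : 6 * η ^ 3 = 0 := by
      rw [hm, h''] at hrel
      linear_combination -hrel
    simp [hη] at this
  -- `(f : g : η) = (6 + 2U : U + V + 3 : -U)` identifies the cubic in `f, g, η` with `curveE`
  obtain ⟨κ, hκ⟩ : ∃ κ : ℚ, κ = (f + 2 * η) / 6 := ⟨_, rfl⟩
  have hκ0 : κ ≠ 0 := by rw [hκ]; exact div_ne_zero hr (by norm_num)
  obtain ⟨U, hU⟩ : ∃ U : ℚ, U = -η / κ := ⟨_, rfl⟩
  obtain ⟨V, hV⟩ : ∃ V : ℚ, V = g / κ - U - 3 := ⟨_, rfl⟩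
  have eη : (η : ℚ) = -(κ * U) := by rw [hU]; field_simp
  have ef : (f : ℚ) = κ * (6 + 2 * U) := by linear_combination -6 * hκ - 2 * eη
  have eg : (g : ℚ) = κ * (U + V + 3) := by rw [hV]; field_simp; ring
  have hmQ : (m : ℚ) = f ^ 2 - f * g + g ^ 2 := by exact_mod_cast hm
  have hrelQ : (f : ℚ) * g * (f - g) = 2 * η * (m - η ^ 2) := by exact_mod_cast hrel
  have heqQ : (e : ℚ) = 3 * η * m := by exact_mod_cast heq
  have hAQ : (A : ℚ) = f ^ 3 + g ^ 3 - 3 * f * g ^ 2 + 3 * f * g * (f - g) - 2 * e := by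
    exact_mod_cast hAf
  have hBQ : (B : ℚ) = 2 * (3 * f * g * (f - g)) - (f ^ 3 + g ^ 3 - 3 * f * g ^ 2) - 2 * e := by
    exact_mod_cast hBf
  have hS : OnE U V := by
    unfold OnE
    have h6 : 6 * κ ^ 3 ≠ 0 := mul_ne_zero (by norm_num) (pow_ne_zero 3 hκ0)
    refine mul_left_cancel₀ h6 ?_
    rw [hmQ, ef, eg, eη] at hrelQ
    linear_combination -hrelQ
  have hVF : V ^ 2 = U ^ 3 + 9 * (U + 1) ^ 2 := hS
  obtain ⟨F, hF⟩ : ∃ F, F = U ^ 3 + 9 * (U + 1) ^ 2 := ⟨_, rfl⟩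
  obtain ⟨M, hM⟩ : ∃ M, M = 3 * (U + 3) ^ 2 + F := ⟨_, rfl⟩
  obtain ⟨p, hp⟩ : ∃ p, p = 9 * U ^ 3 - 3 * U * M := ⟨_, rfl⟩
  obtain ⟨q, hq⟩ : ∃ q, q = 9 * (U + 3) ^ 2 - F := ⟨_, rfl⟩
  have emM : (m : ℚ) = κ ^ 2 * M := by
    rw [hmQ, ef, eg, hM, hF]
    linear_combination κ ^ 2 * hVF
  have eE : (e : ℚ) = κ ^ 3 * (-3 * U * M) := by
    rw [heqQ, emM, eη]
    ring
  have eA : (A : ℚ) = κ ^ 3 * (p - q * V) := by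
    rw [hAQ, eE, ef, eg, hp, hq, hM, hF]
    linear_combination κ ^ 3 * (V - 9 * (U + 3)) * hVF
  have eB : (B : ℚ) = κ ^ 3 * (p + q * V) := by
    rw [hBQ, eE, ef, eg, hp, hq, hM, hF]
    linear_combination κ ^ 3 * (-V - 9 * (U + 3)) * hVF
  have heQ : (e : ℚ) ≠ 0 := by exact_mod_cast he
  have hM0 : M ≠ 0 := by
    rintro rfl
    rw [mul_zero] at emM
    exact hm0 (by exact_mod_cast emM)
  have hU0 : U ≠ 0 := by
    rintro rfl
    apply hη
    rw [mul_zero, neg_zero] at eη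
    exact_mod_cast eη
  have hκ3 : κ ^ 3 ≠ 0 := pow_ne_zero 3 hκ0
  have es : s = (p - q * V) / (-3 * U * M) := by
    rw [eq_div_iff (by simp [hU0, hM0])]
    refine mul_left_cancel₀ hκ3 ?_
    linear_combination hA + eA - s * eE
  have et : t = -((p + q * V) / (-3 * U * M)) := by
    rw [← neg_eq_iff_eq_neg, eq_div_iff (by simp [hU0, hM0])]
    refine mul_left_cancel₀ hκ3 ?_
    linear_combination hB + eB + t * eE
  refine ⟨pt U V hS, neg_triple hS hF hM hp hq hU0 hM0 h ?_ ?_⟩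
  · rw [hst, es, et, hF, ← hVF]
    field_simp
    ring
  · have e2 : v = (s ^ 3 + t ^ 3) / 2 := by linarith
    rw [e2, es, et, hF, ← hVF]
    field_simp
    ring

/-! ### Descent modulo tripling -/

theorem onE_Q : OnE (-3) 3 := by norm_num [OnE]
theorem onE_T : OnE 0 3 := by norm_num [OnE]

/-- A generator of the free part of `curveE(ℚ)`. -/
def ptQ : curveE.Point := pt (-3) 3 onE_Q

/-- A point of order three. -/
def ptT : curveE.Point := pt 0 3 onE_T

/-- If `xy` is a cube and the only common primes of `x` and `y` are `2` and `3`, then `x` is a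
cube up to a divisor of `36`. -/
theorem cube_up_to_six {x y n : ℤ} (hn : n ≠ 0) (h : x * y = n ^ 3)
    (hp : ∀ p : ℤ, Prime p → p ∣ x → p ∣ y → p ∣ 6) :
    ∃ i < 3, ∃ j < 3, ∃ t : ℤ, x = 2 ^ i * 3 ^ j * t ^ 3 := by
  have hx : x ≠ 0 := by
    rintro rfl
    rw [zero_mul] at h
    exact hn (pow_eq_zero_iff (by norm_num) |>.mp h.symm)
  obtain ⟨x₁, h₁, d₁⟩ := FiniteMultiplicity.exists_eq_pow_mul_and_not_dvd
    (Int.finiteMultiplicity_iff (a := 2) (b := x) |>.mpr ⟨by decide, hx⟩)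
  generalize multiplicity 2 x = a at h₁
  have hx₁ : x₁ ≠ 0 := by
    rintro rfl
    simp at d₁
  obtain ⟨x₂, h₂, d₂⟩ := FiniteMultiplicity.exists_eq_pow_mul_and_not_dvd
    (Int.finiteMultiplicity_iff (a := 3) (b := x₁) |>.mpr ⟨by decide, hx₁⟩)
  generalize multiplicity 3 x₁ = b at h₂
  have hx₂ : x₂ ≠ 0 := by
    rintro rfl
    simp at d₂
  have c2 : IsCoprime x₂ 2 := by
    refine ((Prime.coprime_iff_not_dvd Int.prime_two).mpr fun h' => d₁ ?_).symm
    rw [h₂]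
    exact dvd_mul_of_dvd_right h' _
  have c3 : IsCoprime x₂ 3 := ((Prime.coprime_iff_not_dvd Int.prime_three).mpr d₂).symm
  have cy : IsCoprime x₂ y := by
    refine isCoprime_of_prime_dvd (fun h' => hx₂ h'.1) fun p pp h1 h2 => ?_
    have h6 : p ∣ 2 * 3 := hp p pp (by rw [h₁, h₂, ← mul_assoc]; exact dvd_mul_of_dvd_right h1 _) h2
    have c6 := c2.mul_right c3
    exact pp.not_isUnit (c6.isUnit_of_dvd' h1 h6)
  obtain ⟨d, hd⟩ := Int.eq_pow_of_mul_eq_pow_odd_left (a := x₂) (b := 2 ^ a * 3 ^ b * y) (c := n)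
    ((c2.pow_right.mul_right c3.pow_right).mul_right cy) (by decide : Odd 3)
    (by rw [← h, h₁, h₂]; ring)
  refine ⟨a % 3, Nat.mod_lt _ (by norm_num), b % 3, Nat.mod_lt _ (by norm_num),
    2 ^ (a / 3) * 3 ^ (b / 3) * d, ?_⟩
  rw [h₁, h₂, hd]
  conv_lhs => rw [← Nat.mod_add_div a 3, ← Nat.mod_add_div b 3]
  ring

/-- The function `V - 3(U + 1)` takes values in finitely many classes modulo cubes. -/
theorem OnE.cube_class {u v : ℚ} (h : OnE u v) (hu : u ≠ 0) :
    ∃ i < 3, ∃ j < 3, ∃ t : ℚ, v - 3 * (u + 1) = 2 ^ i * 3 ^ j * t ^ 3 := by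
  obtain ⟨e, m, he, -, hcop, hue, hve, heq⟩ := h.integral
  set n := u.num with hn
  have hn0 : n ≠ 0 := by rwa [hn, Rat.num_ne_zero]
  obtain ⟨i, hi, j, hj, t, ht⟩ := cube_up_to_six (x := m - 3 * e * (n + e ^ 2))
    (y := m + 3 * e * (n + e ^ 2)) hn0 (by linear_combination heq) (by
      intro p hp h1 h2
      by_contra h6
      have h3 : p ∣ n := hp.dvd_of_dvd_pow (n := 3) <| by
        have : n ^ 3 = (m - 3 * e * (n + e ^ 2)) * (m + 3 * e * (n + e ^ 2)) := by
          linear_combination -heq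
        rw [this]
        exact dvd_mul_of_dvd_left h1 _
      have h4 : p ∣ 6 * (e * (n + e ^ 2)) := by
        have := dvd_sub h2 h1
        ring_nf at this ⊢
        exact this
      have h5 : p ∣ e * (n + e ^ 2) := (hp.dvd_or_dvd h4).resolve_left h6
      have h7 : p ∣ e := by
        rcases hp.dvd_or_dvd h5 with h' | h'
        · exact h'
        · exact hp.dvd_of_dvd_pow ((dvd_add_right h3).mp h')
      exact hp.not_isUnit (hcop.isUnit_of_dvd' h3 h7))
  refine ⟨i, hi, j, hj, t / e, ?_⟩
  have heQ : (e : ℚ) ≠ 0 := by exact_mod_cast he.ne'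
  have htQ : (m : ℚ) - 3 * e * (n + e ^ 2) = 2 ^ i * 3 ^ j * t ^ 3 := by exact_mod_cast ht
  rw [hve, hue, div_pow, ← mul_div_assoc, ← htQ]
  field_simp

/-- The points congruent, modulo tripling, to a combination of `ptQ` and `ptT`. -/
def Gen (P : curveE.Point) : Prop :=
  ∃ (a b : ℤ) (S : curveE.Point), P = a • ptQ + b • ptT + (3 : ℤ) • S

/-- All points whose value of `V - 3(U + 1)` is `c` times a cube satisfy `Gen`. -/
def GenClass (c : ℚ) : Prop :=
  ∀ u v t h, u ≠ 0 → v - 3 * (u + 1) = c * t ^ 3 → Gen (pt u v h)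

theorem GenClass.one : GenClass 1 := by
  intro u v t h hu ht
  obtain ⟨S, hS⟩ := eq_neg_triple_of_cube (t := t) h hu (by rw [ht, one_mul])
  refine ⟨0, 0, -S, ?_⟩
  rw [hS]
  module

theorem GenClass.mul_cube {c : ℚ} (d : ℚ) (hc : GenClass c) : GenClass (c * d ^ 3) := by
  intro u v t h hu ht
  exact hc u v (d * t) h hu (by rw [ht]; ring)

theorem neg_ptQ : -ptQ = pt (-3) (-3) onE_Q.neg := pt_neg _
theorem neg_ptT : -ptT = pt 0 (-3) onE_T.neg := pt_neg _

theorem Gen.of_add_neg_T {P : curveE.Point} (h : Gen (P + -ptT)) : Gen P := by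
  obtain ⟨a, b, S, h⟩ := h
  refine ⟨a, b + 1, S, ?_⟩
  rw [← sub_eq_add_neg, sub_eq_iff_eq_add] at h
  rw [h]
  module

theorem Gen.of_add_neg_Q {P : curveE.Point} (h : Gen (P + -ptQ)) : Gen P := by
  obtain ⟨a, b, S, h⟩ := h
  refine ⟨a + 1, b, S, ?_⟩
  rw [← sub_eq_add_neg, sub_eq_iff_eq_add] at h
  rw [h]
  module

/-- The points with first coordinate `0` are `±T`. -/
theorem gen_of_zero {u v : ℚ} (h : OnE u v) (hu : u = 0) : Gen (pt u v h) := by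
  subst hu
  have h' : (v - 3) * (v + 3) = 0 := by
    unfold OnE at h
    linear_combination h
  rcases mul_eq_zero.mp h' with h' | h'
  · obtain rfl : v = 3 := by linarith
    exact ⟨0, 1, 0, by simp [ptT, zsmul_zero]⟩
  · obtain rfl : v = -3 := by linarith
    exact ⟨0, -1, 0, by rw [← neg_ptT]; simp [zsmul_zero]⟩

theorem gen_of_neg_three {u v : ℚ} (h : OnE u v) (hu : u = -3) : Gen (pt u v h) := by
  subst hu
  have h' : (v - 3) * (v + 3) = 0 := by
    unfold OnE at h
    linear_combination h
  rcases mul_eq_zero.mp h' with h' | h'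
  · obtain rfl : v = 3 := by linarith
    exact ⟨1, 0, 0, by simp [ptQ, zsmul_zero]⟩
  · obtain rfl : v = -3 := by linarith
    exact ⟨-1, 0, 0, by rw [← neg_ptQ]; simp [zsmul_zero]⟩

/-- Subtracting `T` multiplies the class of `V - 3(U + 1)` by `6`. -/
theorem GenClass.of_six_mul {c : ℚ} (hc : GenClass (6 * c)) : GenClass c := by
  intro u v t h hu ht
  obtain ⟨l, hl⟩ : ∃ l, l = (v + 3) / u := ⟨_, rfl⟩
  have hl' : l * u = v + 3 := by rw [hl]; field_simp
  obtain ⟨u', hu'⟩ : ∃ u', u' = l ^ 2 - 9 - u := ⟨_, rfl⟩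
  obtain ⟨h', e⟩ := pt_add (u₃ := u') h onE_T.neg hu l (by rw [sub_zero, hl']; ring)
    (by rw [hu']; ring) rfl
  apply Gen.of_add_neg_T
  rw [neg_ptT, e]
  by_cases h0 : u' = 0
  · exact gen_of_zero _ h0
  have hv : v ^ 2 = u ^ 3 + 9 * (u + 1) ^ 2 := h
  have huu : u * u' = 6 * (l + 3) := by
    refine mul_left_cancel₀ hu ?_
    rw [hu']
    have : v = l * u - 3 := by linarith
    rw [this] at hv
    linear_combination hv
  refine hc u' _ (-(u' * t) / 6) h' h0 ?_
  have hw : -(v + l * (u' - u)) - 3 * (u' + 1) = -(u' ^ 3) / 36 * (v - 3 * (u + 1)) := by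
    linear_combination (u' / 6 + u' ^ 2 / 36 * (l - 3)) * huu - u' ^ 2 / 6 * hu' +
      (1 - u' ^ 3 / 36) * hl'
  rw [hw, ht]
  ring

/-- Subtracting `Q` multiplies the class of `V - 3(U + 1)` by `3`. -/
theorem GenClass.of_three_mul {c : ℚ} (hc : GenClass (3 * c)) : GenClass c := by
  intro u v t h hu ht
  by_cases h3 : u = -3
  · exact gen_of_neg_three _ h3
  have h3' : u + 3 ≠ 0 := fun h' => h3 (by linarith)
  obtain ⟨l, hl⟩ : ∃ l, l = (v + 3) / (u + 3) := ⟨_, rfl⟩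
  have hl' : l * (u + 3) = v + 3 := by rw [hl]; field_simp
  obtain ⟨u', hu'⟩ : ∃ u', u' = l ^ 2 - 6 - u := ⟨_, rfl⟩
  obtain ⟨h', e⟩ := pt_add (u₃ := u') h onE_Q.neg h3 l (by rw [sub_neg_eq_add, hl']; ring)
    (by rw [hu']; ring) rfl
  apply Gen.of_add_neg_Q
  rw [neg_ptQ, e]
  by_cases h0 : u' = 0
  · exact gen_of_zero _ h0
  have hv : v ^ 2 = u ^ 3 + 9 * (u + 1) ^ 2 := h
  have hv' : v = l * (u + 3) - 3 := by linarith
  have huu : u * u' = -3 * l * (l - 2) := by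
    refine mul_left_cancel₀ h3' ?_
    rw [hu']
    rw [hv'] at hv
    linear_combination hv
  have hl2 : l - 2 ≠ 0 := by
    intro h2
    rw [h2, mul_zero] at huu
    exact (mul_ne_zero hu h0) huu
  refine hc u' _ (-(u' * t) / (3 * (l - 2))) h' h0 ?_
  obtain ⟨w, hw⟩ : ∃ w, w = v - 3 * (u + 1) := ⟨_, rfl⟩
  have hx : u' ^ 2 = (l ^ 2 - 6) * u' + 3 * l * (l - 2) := by
    linear_combination -huu + u' * hu'
  have hw0 : w = (l - 3) * (l ^ 2 - 6 - u') + 3 * l - 6 := by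
    rw [hw, hv']
    linear_combination (l - 3) * hu'
  have hw1 : w * u' = 3 * (l - 2) * (u' - l * (l - 3)) := by
    rw [hw0]
    linear_combination (3 - l) * hx
  have hw2 : w * u' ^ 2 = 9 * (l - 2) ^ 2 * (u' + l) := by
    linear_combination u' * hw1 + 3 * (l - 2) * hx
  have hw3 : w * u' ^ 3 = 9 * (l - 2) ^ 3 * ((l + 3) * u' + 3 * l) := by
    linear_combination u' * hw2 + 9 * (l - 2) ^ 2 * hx
  rw [← hw] at ht
  have e1 : 3 * c * (-(u' * t) / (3 * (l - 2))) ^ 3 = -(w * u' ^ 3) / (9 * (l - 2) ^ 3) := by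
    rw [ht]
    field_simp
    ring
  rw [e1, hw3, hv']
  field_simp
  ring

/-- Every point is a combination of `Q` and `T` modulo tripling. -/
theorem gen_all (P : curveE.Point) : Gen P := by
  obtain rfl | ⟨u, v, h, rfl⟩ := pt_cases P
  · exact ⟨0, 0, 0, by simp [zsmul_zero]⟩
  by_cases hu : u = 0
  · exact gen_of_zero h hu
  obtain ⟨i, hi, j, hj, t, ht⟩ := h.cube_class hu
  suffices H : GenClass (2 ^ i * 3 ^ j) from H u v t h hu ht
  have H1 := GenClass.one
  have H9 : GenClass 9 := .of_three_mul (by convert H1.mul_cube 3 using 1; norm_num)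
  have H3 : GenClass 3 := .of_three_mul (by convert H9 using 1; norm_num)
  have H4 : GenClass 4 := .of_six_mul (by convert H3.mul_cube 2 using 1; norm_num)
  have H12 : GenClass 12 := .of_six_mul (by convert H9.mul_cube 2 using 1; norm_num)
  have H36 : GenClass 36 := .of_six_mul (by convert H1.mul_cube 6 using 1; norm_num)
  have H2 : GenClass 2 := .of_six_mul (by convert H12 using 1; norm_num)
  have H6 : GenClass 6 := .of_six_mul (by convert H36 using 1; norm_num)
  have H18 : GenClass 18 := .of_six_mul (by convert H4.mul_cube 3 using 1; norm_num)
  interval_cases i <;> interval_cases j <;> norm_num <;> assumption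

/-! ### Generators of the Mordell-Weil group -/

theorem T_add_T : ptT + ptT = -ptT := by
  obtain ⟨h, e⟩ := pt_dbl (u₃ := 0) (v₃ := -3) onE_T (by norm_num) 3 (by norm_num) (by norm_num)
    (by norm_num)
  rw [neg_ptT]
  exact e

theorem three_T : (3 : ℤ) • ptT = 0 := by
  have h := T_add_T
  rw [show (3 : ℤ) • ptT = ptT + ptT + ptT by module, h]
  exact neg_add_cancel _

theorem two_Q : ∃ h, ptQ + ptQ = pt (-3 / 4) (3 / 8) h :=
  pt_dbl onE_Q (by norm_num) (-3 / 2) (by norm_num) (by norm_num) (by norm_num)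

/-- The subgroup generated by `Q` and `T`. -/
def InQT (P : curveE.Point) : Prop := ∃ a b : ℤ, P = a • ptQ + b • ptT

theorem InQT.neg {P : curveE.Point} (h : InQT P) : InQT (-P) := by
  obtain ⟨a, b, rfl⟩ := h
  exact ⟨-a, -b, by module⟩

/-- The points `(n / e², m / e³)` with `e ≤ 5` and `|n| ≤ 31`. -/
theorem small_search : ∀ e ∈ Finset.Icc (1 : ℤ) 5, ∀ n ∈ Finset.Icc (-31 : ℤ) 31,
    IsSquare (n ^ 3 + 9 * (n + e ^ 2) ^ 2 * e ^ 2) → Int.gcd n e = 1 →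
    (e = 1 ∧ (n = 0 ∨ n = -3 ∨ n = -6 ∨ n = -2 ∨ n = 4 ∨ n = 12)) ∨ (e = 2 ∧ n = -3) := by
  decide +kernel

/-- The first coordinate determines a point up to sign. -/
theorem inQT_of_coord {u v w : ℚ} (h : OnE u v) (h' : OnE u w) (hw : InQT (pt u w h')) :
    InQT (pt u v h) := by
  have hvw : (v - w) * (v + w) = 0 := by
    unfold OnE at h h'
    linear_combination h - h'
  rcases mul_eq_zero.mp hvw with h0 | h0
  · obtain rfl : v = w := by linarith
    exact hw
  · obtain rfl : v = -w := by linarith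
    rw [← pt_neg]
    exact hw.neg

theorem inQT_of_ht {u v : ℚ} (h : OnE u v) (hu : ht u < 32) : InQT (pt u v h) := by
  obtain ⟨h2, e2⟩ := two_Q
  obtain ⟨e, m, he, hden, hcop, hue, -, heq⟩ := h.integral
  have h1 := num_le_ht u
  have h1' := den_le_ht u
  rw [hden] at h1'
  have he5 : e ≤ 5 := by nlinarith [le_abs_self (e ^ 2)]
  have hab := abs_le.mp (h1.trans (show ht u ≤ 31 by omega))
  rcases small_search e (Finset.mem_Icc.mpr ⟨he, he5⟩) u.num (Finset.mem_Icc.mpr hab)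
    ⟨m, by rw [← pow_two, heq]⟩ (Int.isCoprime_iff_gcd_eq_one.mp hcop) with ⟨rfl, hn⟩ | ⟨rfl, hn⟩
  · rcases hn with hn | hn | hn | hn | hn | hn
    all_goals
      rw [hn] at hue
      norm_num at hue
      subst hue
    · exact inQT_of_coord h onE_T ⟨0, 1, by rw [← ptT]; module⟩
    · exact inQT_of_coord h onE_Q ⟨1, 0, by rw [← ptQ]; module⟩
    · obtain ⟨h3, e3⟩ := pt_add (u₃ := -6) (v₃ := -3) onE_Q onE_T (by norm_num) 0 (by norm_num)
        (by norm_num) (by norm_num)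
      exact inQT_of_coord h h3 ⟨1, 1, by rw [← e3, ← ptQ, ← ptT]; module⟩
    · obtain ⟨h3, e3⟩ := pt_add (u₃ := -2) (v₃ := -1) onE_Q onE_T.neg (by norm_num) (-2)
        (by norm_num) (by norm_num) (by norm_num)
      exact inQT_of_coord h h3 ⟨1, -1, by rw [← e3, ← ptQ, ← neg_ptT]; module⟩
    · obtain ⟨h3, e3⟩ := pt_add (u₃ := 4) (v₃ := -17) h2 onE_T (by norm_num) (7 / 2)
        (by norm_num) (by norm_num) (by norm_num)
      exact inQT_of_coord h h3 ⟨2, 1, by rw [← e3, ← e2, ← ptT]; module⟩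
    · obtain ⟨h3, e3⟩ := pt_add (u₃ := 12) (v₃ := 57) h2 onE_T.neg (by norm_num) (-9 / 2)
        (by norm_num) (by norm_num) (by norm_num)
      exact inQT_of_coord h h3 ⟨2, -1, by rw [← e3, ← e2, ← neg_ptT]; module⟩
  · rw [hn] at hue
    norm_num at hue
    have hue : u = -3 / 4 := by rw [hue]; norm_num
    subst hue
    exact inQT_of_coord h h2 ⟨2, 0, by rw [← e2]; module⟩

theorem height_add_T {H : curveE.Point → ℝ}
    (hp : ∀ P R, H (P + R) + H (P - R) = 2 * H P + 2 * H R)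
    (P : curveE.Point) (b : ℤ) : H (P + b • ptT) = H P := by
  have h1 := quad_zsmul H hp (P + b • ptT) 3
  rw [show (3 : ℤ) • (P + b • ptT) = (3 : ℤ) • P + b • (3 : ℤ) • ptT by module, three_T,
    zsmul_zero, add_zero, quad_zsmul H hp] at h1
  push_cast at h1
  linarith

theorem height_nonneg {H : curveE.Point → ℝ}
    (hp : ∀ P R, H (P + R) + H (P - R) = 2 * H P + 2 * H R)
    (hlow : ∀ P, nh P - 13 / 3 ≤ H P) (P : curveE.Point) : 0 ≤ H P := by
  by_contra! hneg
  obtain ⟨n, hn⟩ := exists_nat_gt (13 / 3 / (-H P))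
  have h1 := hlow ((n : ℤ) • P)
  rw [quad_zsmul H hp] at h1
  have h2 := nh_nonneg ((n : ℤ) • P)
  rw [div_lt_iff₀ (by linarith)] at hn
  push_cast at h1
  have hn1 : (1 : ℝ) ≤ n := by
    rcases Nat.eq_zero_or_pos n with rfl | h0
    · push_cast at hn
      linarith
    · exact_mod_cast h0
  nlinarith

/-- `Q` and `T` generate all rational points. The descent replaces `P` by `R` with
`9 H(R) = H(P - a'Q)` and `a' ∈ {0, 1, -1}`, until the height is at most `3/5`, where the naive
multiplicative height is below `2⁵`. -/
theorem inQT_all {H : curveE.Point → ℝ}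
    (hp : ∀ P R, H (P + R) + H (P - R) = 2 * H P + 2 * H R)
    (hlow : ∀ P, nh P - 13 / 3 ≤ H P)
    (hup : ∀ P, H P ≤ nh P + 3) (P : curveE.Point) : InQT P := by
  have h0 := height_nonneg hp hlow
  have hQ : H ptQ ≤ 5 / 4 := by
    obtain ⟨h2, e2⟩ := two_Q
    have h1 := hup (ptQ + ptQ)
    have h3 := quad_zsmul H hp ptQ 2
    rw [show (2 : ℤ) • ptQ = ptQ + ptQ by module] at h3
    rw [h3, e2, nh_pt, show ht (-3 / 4) = 4 by norm_num [ht, Rat.num_div_eq_of_coprime],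
      show ((4 : ℤ) : ℝ) = 2 ^ 2 by norm_num,
      Real.logb_pow, Real.logb_self_eq_one one_lt_two] at h1
    push_cast at h1
    linarith
  suffices key : ∀ n : ℕ, ∀ P, H P ≤ 3 / 5 + n / 10 → InQT P by
    obtain ⟨n, hn⟩ := exists_nat_gt (10 * H P)
    exact key n P (by linarith)
  intro n
  induction n with
  | zero =>
    intro P hP
    obtain rfl | ⟨u, v, h, rfl⟩ := pt_cases P
    · exact ⟨0, 0, by module⟩
    refine inQT_of_ht h ?_
    have h1 := hlow (pt u v h)
    rw [nh_pt] at h1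
    have h2 : Real.logb 2 (ht u) < 5 := by
      push_cast at hP
      linarith
    rw [Real.logb_lt_iff_lt_rpow one_lt_two (ht_pos u)] at h2
    norm_num at h2
    exact_mod_cast h2
  | succ n ih =>
    intro P hP
    by_cases hsm : H P ≤ 3 / 5
    · exact ih P (hsm.trans (by linarith [(Nat.cast_nonneg n : (0 : ℝ) ≤ n)]))
    push Not at hsm
    obtain ⟨a, b, S, hS⟩ := gen_all P
    obtain ⟨k, a', ha, ha'⟩ : ∃ k a' : ℤ, a = a' + 3 * k ∧ (a' = 0 ∨ a' = 1 ∨ a' = -1) :=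
      ⟨(a + 1) / 3, a - 3 * ((a + 1) / 3), by ring, by omega⟩
    obtain ⟨R, hR⟩ : ∃ R, R = k • ptQ + S := ⟨_, rfl⟩
    have hR3 : (3 : ℤ) • R = P - a' • ptQ + (-b) • ptT := by
      rw [hR, hS, ha]
      module
    have hR9 := quad_zsmul H hp R 3
    rw [hR3, height_add_T hp] at hR9
    have hle : H (P - a' • ptQ) ≤ 2 * H P + 2 * H ptQ := by
      have h1 := hp P ptQ
      have h2 := h0 (P - ptQ)
      have h3 := h0 (P + ptQ)
      have h4 := h0 P
      have h5 := h0 ptQ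
      rcases ha' with rfl | rfl | rfl
      · rw [zero_zsmul, sub_zero]; linarith
      · rw [one_zsmul]; linarith
      · rw [neg_zsmul, one_zsmul, sub_neg_eq_add]; linarith
    obtain ⟨c, d, hcd⟩ := ih R (by push_cast at hP hR9; linarith)
    refine ⟨a' + 3 * c, b + 3 * d, ?_⟩
    have : P = (3 : ℤ) • R + a' • ptQ + b • ptT := by rw [hR3]; module
    rw [this, hcd]
    module

/-- A lower bound for `H(Q)`, obtained from the naive height of `8Q`. -/
theorem height_Q_lower {H : curveE.Point → ℝ}
    (hp : ∀ P R, H (P + R) + H (P - R) = 2 * H P + 2 * H R)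
    (hlow : ∀ P, nh P - 13 / 3 ≤ H P) : 13 < 27 * H ptQ := by
  obtain ⟨h2, e2⟩ := two_Q
  obtain ⟨h4, e4⟩ := pt_dbl (u₃ := 969 / 16) (v₃ := -32397 / 64) h2 (by norm_num) (33 / 4)
    (by norm_num) (by norm_num) (by norm_num)
  obtain ⟨h8, e8⟩ := pt_dbl (u₃ := 96967613913 / 7463577664)
    (v₃ := -40550347301512899 / 644793401548288) h4 (by norm_num) (-1033521 / 86392)
    (by norm_num) (by norm_num) (by norm_num)
  have h1 := quad_zsmul H hp ptQ 8
  rw [show (8 : ℤ) • ptQ = ptQ + ptQ + (ptQ + ptQ) + (ptQ + ptQ + (ptQ + ptQ)) by module, e2, e4,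
    e8] at h1
  have h3 := hlow (pt _ _ h8)
  rw [h1, nh_pt, show ht (96967613913 / 7463577664) = 96967613913 by
    norm_num [ht, Rat.num_div_eq_of_coprime]] at h3
  have h5 : (36 : ℝ) ≤ Real.logb 2 (96967613913 : ℤ) := by
    rw [Real.le_logb_iff_rpow_le one_lt_two (by norm_num)]
    norm_num
  push_cast at h3 h5
  linarith

/-! ### The genus two curve -/

theorem sq_ne_five (z : ℚ) : z ^ 2 ≠ 5 := fun h => by
  have : ¬ IsSquare (5 : ℚ) := by decide +kernel
  exact this ⟨z, by rw [← h, pow_two]⟩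

theorem sq_ne_twentyone (z : ℚ) : z ^ 2 ≠ 21 := fun h => by
  have : ¬ IsSquare (21 : ℚ) := by decide +kernel
  exact this ⟨z, by rw [← h, pow_two]⟩

/-- A root of `r³ - Nr = c` and a solution of `y² = 9c² - N³` give a point of `curveE`. -/
theorem onE_root {N c r y : ℚ} (hr : r ≠ 0) (hc : r ^ 3 - N * r = c)
    (hy : y ^ 2 = 9 * c ^ 2 - N ^ 3) : OnE (-N / r ^ 2) (y / r ^ 3) := by
  unfold OnE
  have e : (y / r ^ 3) ^ 2 = (9 * c ^ 2 - N ^ 3) / r ^ 6 := by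
    rw [div_pow, hy, ← pow_mul]
  rw [e, ← hc]
  field_simp
  ring

/-- If `r³ - Nr - c` has the three roots `rᵢ`, the points attached to them lie on the line
`V = (y / c)(U + 1)`, so they add up to zero. -/
theorem collinear_sum {r₁ r₂ r₃ N c y : ℚ} (h₁ : r₁ ≠ 0) (h₂ : r₂ ≠ 0) (h₃ : r₃ ≠ 0)
    (hs : r₃ = -r₁ - r₂) (hN : N = r₁ ^ 2 + r₁ * r₂ + r₂ ^ 2) (hc : c = r₁ * r₂ * r₃)
    (hN0 : N ≠ 0) (hne : r₁ ^ 2 ≠ r₂ ^ 2) (hy : y ^ 2 = 9 * c ^ 2 - N ^ 3)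
    (k₁ : OnE (-N / r₁ ^ 2) (y / r₁ ^ 3)) (k₂ : OnE (-N / r₂ ^ 2) (y / r₂ ^ 3))
    (k₃ : OnE (-N / r₃ ^ 2) (y / r₃ ^ 3)) :
    pt _ _ k₁ + pt _ _ k₂ + pt _ _ k₃ = 0 := by
  have hc0 : c ≠ 0 := by rw [hc]; positivity
  have hu : ∀ r, r ≠ 0 → r ^ 3 - N * r = c → y / r ^ 3 = y / c * (-N / r ^ 2 + 1) := by
    intro r hr e
    have : -N / r ^ 2 + 1 = c / r ^ 3 := by
      rw [← e]
      field_simp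
      ring
    rw [this]
    field_simp
  have v₁ := hu r₁ h₁ (by rw [hc, hN, hs]; ring)
  have v₂ := hu r₂ h₂ (by rw [hc, hN, hs]; ring)
  have v₃ := hu r₃ h₃ (by rw [hc, hN, hs]; ring)
  have hune : -N / r₁ ^ 2 ≠ -N / r₂ ^ 2 := by
    intro e
    rw [div_eq_div_iff (pow_ne_zero 2 h₁) (pow_ne_zero 2 h₂)] at e
    exact hne (mul_left_cancel₀ (neg_ne_zero.mpr hN0) e).symm
  obtain ⟨h, e⟩ := pt_add (u₃ := -N / r₃ ^ 2) (v₃ := -(y / r₃ ^ 3)) k₁ k₂ hune (y / c)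
    (by rw [v₁, v₂]; ring)
    (by
      have e1 : 1 / r₁ ^ 2 + 1 / r₂ ^ 2 + 1 / r₃ ^ 2 = N ^ 2 / c ^ 2 := by
        rw [hc]
        field_simp
        rw [hN, hs]
        ring
      have e2 : (y / c) ^ 2 = 9 - N * (N ^ 2 / c ^ 2) := by
        rw [div_pow, hy]
        field_simp
      rw [e2, ← e1]
      ring)
    (by rw [v₁, v₃]; ring)
  rw [e, ← pt_neg k₃]
  exact neg_add_cancel _

/-- The height of `u = -N / R²` is comparable to `N` when cancellation is only by divisors of `8`.
It is applied with `x = p / q`, `N = 3p² + q²` and `R = 2p, q - p, -q - p`. -/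
theorem ht_param {N R : ℤ} (hN : 0 < N) (hR : R ≠ 0) (hR' : 3 * R ^ 2 ≤ 4 * N)
    (hk : ∀ k, k ∣ N → k ∣ R ^ 2 → k ∣ 8) {u : ℚ} (hu : u * R ^ 2 = -N) :
    3 * ht u ≤ 4 * N ∧ N ≤ 8 * ht u := by
  obtain ⟨k, hk0, e1, e2⟩ := exists_mul_num_den (u := u) (a := -N) (b := R ^ 2) (pow_ne_zero 2 hR)
    (by push_cast; exact hu)
  have h8 := hk k ((dvd_neg).mp ⟨_, e1⟩) ⟨_, e2⟩
  have hk8 : |k| ≤ 8 := Int.le_of_dvd (by norm_num) ((abs_dvd k 8).mpr h8)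
  have hk1 : 1 ≤ |k| := Int.one_le_abs hk0
  have eN : N = |k| * |u.num| := by
    rw [← abs_mul, ← e1, abs_neg, abs_of_pos hN]
  have eR : R ^ 2 = |k| * u.den := by
    have : |R ^ 2| = |k * u.den| := by rw [e2]
    rwa [abs_mul, Nat.abs_cast, abs_of_nonneg (sq_nonneg R)] at this
  constructor
  · unfold ht
    rw [mul_max_of_nonneg _ _ (by norm_num)]
    refine max_le ?_ ?_
    · nlinarith [abs_nonneg u.num]
    · have : (0 : ℤ) ≤ u.den := Int.natCast_nonneg _
      nlinarith
  · have := num_le_ht u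
    nlinarith [abs_nonneg u.num]

theorem dvd_of_dvd_mul_pow {p q k c : ℤ} {n : ℕ} (hpq : IsCoprime p q) (h1 : k ∣ c * p ^ n)
    (h2 : k ∣ c * q ^ n) : k ∣ c := by
  obtain ⟨a, b, hab⟩ := hpq.pow (m := n) (n := n)
  have : c = a * (c * p ^ n) + b * (c * q ^ n) := by linear_combination -c * hab
  rw [this]
  exact dvd_add (dvd_mul_of_dvd_right h1 a) (dvd_mul_of_dvd_right h2 b)

theorem dvd_eight₁ {p q k : ℤ} (hpq : IsCoprime p q) (h1 : k ∣ 3 * p ^ 2 + q ^ 2)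
    (h2 : k ∣ (2 * p) ^ 2) : k ∣ 8 := by
  refine dvd_of_dvd_mul_pow (n := 2) hpq ?_ ?_
  · have : 8 * p ^ 2 = (2 * p) ^ 2 * 2 := by ring
    rw [this]
    exact dvd_mul_of_dvd_left h2 _
  · have : 8 * q ^ 2 = (3 * p ^ 2 + q ^ 2) * 8 - (2 * p) ^ 2 * 6 := by ring
    rw [this]
    exact dvd_sub (dvd_mul_of_dvd_left h1 _) (dvd_mul_of_dvd_left h2 _)

theorem dvd_eight₂ {p q k : ℤ} (hpq : IsCoprime p q) (h1 : k ∣ 3 * p ^ 2 + q ^ 2)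
    (h2 : k ∣ (q - p) ^ 2) : k ∣ 8 := by
  refine dvd_of_dvd_mul_pow (n := 3) hpq ?_ ?_
  · have : 8 * p ^ 3 = (3 * p ^ 2 + q ^ 2) * (3 * p - q) + (q - p) ^ 2 * (q - p) := by ring
    rw [this]
    exact dvd_add (dvd_mul_of_dvd_left h1 _) (dvd_mul_of_dvd_left h2 _)
  · have : 8 * q ^ 3 = (3 * p ^ 2 + q ^ 2) * (5 * q - 3 * p) +
        (q - p) ^ 2 * (3 * q + 9 * p) := by ring
    rw [this]
    exact dvd_add (dvd_mul_of_dvd_left h1 _) (dvd_mul_of_dvd_left h2 _)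

theorem dvd_eight₃ {p q k : ℤ} (hpq : IsCoprime p q) (h1 : k ∣ 3 * p ^ 2 + q ^ 2)
    (h2 : k ∣ (-q - p) ^ 2) : k ∣ 8 :=
  dvd_eight₂ (p := -p) (q := q) hpq.neg_left (by simpa using h1)
    (by convert h2 using 1; ring)

/-- The elements `aQ + bT` with `|a| ≤ 2` and negative first coordinate. -/
theorem coord_of_small {u v : ℚ} (h : OnE u v) (hu : u < 0) {a b : ℤ} (ha : |a| ≤ 2)
    (e : pt u v h = a • ptQ + b • ptT) : u = -3 ∨ u = -3 / 4 ∨ u = -6 ∨ u = -2 := by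
  wlog ha0 : 0 ≤ a generalizing v a b
  · refine this h.neg (a := -a) (b := -b) (by rwa [abs_neg]) ?_ (by omega)
    rw [← pt_neg h, e]
    module
  obtain ⟨b', hb', eb⟩ : ∃ b' : ℤ, (b' = 0 ∨ b' = 1 ∨ b' = -1) ∧ b • ptT = b' • ptT := by
    refine ⟨b - 3 * ((b + 1) / 3), by omega, ?_⟩
    rw [sub_zsmul, mul_comm, mul_zsmul, three_T, zsmul_zero]
    exact (sub_zero _).symm
  rw [eb] at e
  have ha2 : a ≤ 2 := (abs_le.mp ha).2
  obtain ⟨h2, e2⟩ := two_Q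
  have e2' : (2 : ℤ) • ptQ = pt (-3 / 4) (3 / 8) h2 := by rw [← e2]; module
  have hT1 : (-1 : ℤ) • ptT = pt 0 (-3) onE_T.neg := by rw [← neg_ptT]; module
  interval_cases a <;> rcases hb' with rfl | rfl | rfl <;>
    simp only [zero_zsmul, one_zsmul, zero_add, add_zero, e2', hT1] at e
  · exact absurd e (pt_ne_zero h)
  · have := (pt_inj.mp e).1
    linarith
  · have := (pt_inj.mp e).1
    linarith
  · exact Or.inl (pt_inj.mp e).1
  · obtain ⟨h3, e3⟩ := pt_add (u₃ := -6) (v₃ := -3) onE_Q onE_T (by norm_num) 0 (by norm_num)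
      (by norm_num) (by norm_num)
    exact Or.inr (Or.inr (Or.inl (pt_inj.mp (e.trans e3)).1))
  · obtain ⟨h3, e3⟩ := pt_add (u₃ := -2) (v₃ := -1) onE_Q onE_T.neg (by norm_num) (-2)
      (by norm_num) (by norm_num) (by norm_num)
    exact Or.inr (Or.inr (Or.inr (pt_inj.mp (e.trans e3)).1))
  · exact Or.inr (Or.inl (pt_inj.mp e).1)
  · obtain ⟨h3, e3⟩ := pt_add (u₃ := 4) (v₃ := -17) h2 onE_T (by norm_num) (7 / 2)
      (by norm_num) (by norm_num) (by norm_num)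
    have := (pt_inj.mp (e.trans e3)).1
    linarith
  · obtain ⟨h3, e3⟩ := pt_add (u₃ := 12) (v₃ := 57) h2 onE_T.neg (by norm_num) (-9 / 2)
      (by norm_num) (by norm_num) (by norm_num)
    have := (pt_inj.mp (e.trans e3)).1
    linarith

/-- Among three integers of absolute value at least `3` and sum zero two have the same sign, say
`a, b`, and then `c² - a² = 2ab + b² ≥ 27`. -/
theorem exists_small {a b c : ℤ} (h : a + b + c = 0) (hab : |a ^ 2 - b ^ 2| < 27)
    (hac : |a ^ 2 - c ^ 2| < 27) (hbc : |b ^ 2 - c ^ 2| < 27) : |a| ≤ 2 ∨ |b| ≤ 2 ∨ |c| ≤ 2 := by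
  by_contra! hh
  obtain ⟨ha, hb, hc⟩ := hh
  rw [abs_lt] at hab hac hbc
  rw [lt_abs] at ha hb hc
  obtain rfl : c = -a - b := by linarith
  rcases ha with ha | ha <;> rcases hb with hb | hb <;> rcases hc with hc | hc <;>
    nlinarith [mul_nonneg (sub_nonneg.mpr (Int.add_one_le_of_lt ha))
        (sub_nonneg.mpr (Int.add_one_le_of_lt hb)),
      mul_nonneg (sub_nonneg.mpr (Int.add_one_le_of_lt ha))
        (sub_nonneg.mpr (Int.add_one_le_of_lt hc)),
      mul_nonneg (sub_nonneg.mpr (Int.add_one_le_of_lt hb))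
        (sub_nonneg.mpr (Int.add_one_le_of_lt hc))]

/-- Points of comparable naive height have nearby canonical heights. -/
theorem height_close {H : curveE.Point → ℝ} (hlow : ∀ P, nh P - 13 / 3 ≤ H P)
    (hup : ∀ P, H P ≤ nh P + 3) {u v u' v' : ℚ} (h : OnE u v) (h' : OnE u' v')
    (hh : ht u ≤ 16 * ht u') : H (pt u v h) - H (pt u' v' h') < 13 := by
  have h1 := hup (pt u v h)
  have h2 := hlow (pt u' v' h')
  rw [nh_pt] at h1 h2
  have h3 : Real.logb 2 (ht u) ≤ 4 + Real.logb 2 (ht u') := by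
    have : (ht u : ℝ) ≤ 2 ^ 4 * ht u' := by
      norm_num
      exact_mod_cast hh
    have := Real.logb_le_logb_of_le one_lt_two (ht_pos u) this
    rw [Real.logb_mul (by norm_num) (ht_pos u').ne', Real.logb_pow,
      Real.logb_self_eq_one one_lt_two] at this
    push_cast at this
    linarith
  linarith

/-- Among three points with sum zero and comparable naive heights, one is `aQ + bT` with
`|a| ≤ 2`. -/
theorem exists_small_point {u₁ v₁ u₂ v₂ u₃ v₃ : ℚ} (h₁ : OnE u₁ v₁) (h₂ : OnE u₂ v₂)
    (h₃ : OnE u₃ v₃) (hs : pt u₁ v₁ h₁ + pt u₂ v₂ h₂ + pt u₃ v₃ h₃ = 0)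
    (n₁ : u₁ < 0) (n₂ : u₂ < 0) (n₃ : u₃ < 0) {N : ℤ}
    (k₁ : 3 * ht u₁ ≤ 4 * N ∧ N ≤ 8 * ht u₁) (k₂ : 3 * ht u₂ ≤ 4 * N ∧ N ≤ 8 * ht u₂)
    (k₃ : 3 * ht u₃ ≤ 4 * N ∧ N ≤ 8 * ht u₃) :
    ∃ u, (u = u₁ ∨ u = u₂ ∨ u = u₃) ∧ (u = -3 ∨ u = -3 / 4 ∨ u = -6 ∨ u = -2) := by
  obtain ⟨H, hp, hlow, hup⟩ := exists_height
  have hQ := height_Q_lower hp hlow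
  have hH : ∀ a b : ℤ, H (a • ptQ + b • ptT) = a ^ 2 * H ptQ := fun a b => by
    rw [height_add_T hp, quad_zsmul H hp]
  obtain ⟨a₁, b₁, e₁⟩ := inQT_all hp hlow hup (pt u₁ v₁ h₁)
  obtain ⟨a₂, b₂, e₂⟩ := inQT_all hp hlow hup (pt u₂ v₂ h₂)
  obtain ⟨a₃, b₃, e₃⟩ := inQT_all hp hlow hup (pt u₃ v₃ h₃)
  have hsum : a₁ + a₂ + a₃ = 0 := by
    rw [e₁, e₂, e₃, show a₁ • ptQ + b₁ • ptT + (a₂ • ptQ + b₂ • ptT) + (a₃ • ptQ + b₃ • ptT) =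
      (a₁ + a₂ + a₃) • ptQ + (b₁ + b₂ + b₃) • ptT by module] at hs
    have h0 := hH (a₁ + a₂ + a₃) (b₁ + b₂ + b₃)
    have h00 := hH 0 0
    rw [hs] at h0
    rw [show (0 : ℤ) • ptQ + (0 : ℤ) • ptT = 0 by module] at h00
    rw [h00] at h0
    have hQ0 : H ptQ ≠ 0 := by linarith
    simp [hQ0] at h0
    exact_mod_cast h0
  have close : ∀ {u v u' v' : ℚ} (h : OnE u v) (h' : OnE u' v') {a b a' b' : ℤ},
      pt u v h = a • ptQ + b • ptT → pt u' v' h' = a' • ptQ + b' • ptT →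
      (3 * ht u ≤ 4 * N ∧ N ≤ 8 * ht u) → (3 * ht u' ≤ 4 * N ∧ N ≤ 8 * ht u') →
      |a ^ 2 - a' ^ 2| < 27 := by
    intro u v u' v' h h' a b a' b' e e' k k'
    have c1 := height_close hlow hup h h' (by linarith [one_le_ht u'])
    have c2 := height_close hlow hup h' h (by linarith [one_le_ht u])
    rw [e, e', hH, hH] at c1 c2
    have : |(a : ℝ) ^ 2 - a' ^ 2| < 27 := by
      rw [abs_lt]
      constructor <;> nlinarith
    exact_mod_cast this
  rcases exists_small hsum (close h₁ h₂ e₁ e₂ k₁ k₂) (close h₁ h₃ e₁ e₃ k₁ k₃)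
    (close h₂ h₃ e₂ e₃ k₂ k₃) with h | h | h
  · exact ⟨u₁, by simp, coord_of_small h₁ n₁ h e₁⟩
  · exact ⟨u₂, by simp, coord_of_small h₂ n₂ h e₂⟩
  · exact ⟨u₃, by simp, coord_of_small h₃ n₃ h e₃⟩

/-- The first coordinates of the rational points. If `x ≠ ±1/3` the three roots `2x, 1 - x, -1 - x`
have distinct squares, so the points attached to them have distinct first coordinates. -/
theorem x_eq {x y : ℚ} (h : y ^ 2 = 9 * x ^ 6 - 99 * x ^ 4 + 27 * x ^ 2 - 1) :
    x = 1 / 3 ∨ x = -(1 / 3) := by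
  by_contra! hx
  obtain ⟨hx1, hx2⟩ := hx
  have h0 : x ≠ 0 := by
    rintro rfl
    nlinarith [sq_nonneg y]
  have h1 : 1 - x ≠ 0 := by
    intro e
    obtain rfl : x = 1 := by linarith
    nlinarith [sq_nonneg y]
  have h2 : -1 - x ≠ 0 := by
    intro e
    obtain rfl : x = -1 := by linarith
    nlinarith [sq_nonneg y]
  have h0' : 2 * x ≠ 0 := mul_ne_zero two_ne_zero h0
  obtain ⟨N, hN⟩ : ∃ N, N = 3 * x ^ 2 + 1 := ⟨_, rfl⟩
  obtain ⟨c, hc⟩ : ∃ c, c = 2 * x * (x ^ 2 - 1) := ⟨_, rfl⟩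
  have hN0 : 0 < N := by rw [hN]; positivity
  have hy : y ^ 2 = 9 * c ^ 2 - N ^ 3 := by rw [h, hc, hN]; ring
  have k₁ := onE_root h0' (by rw [hN, hc]; ring) hy
  have k₂ := onE_root h1 (by rw [hN, hc]; ring) hy
  have k₃ := onE_root h2 (by rw [hN, hc]; ring) hy
  have hs := collinear_sum h0' h1 h2 (by ring) (by rw [hN]; ring) (by rw [hc]; ring) hN0.ne'
    (by
      intro e
      have : (3 * x - 1) * (x + 1) = 0 := by linear_combination e
      rcases mul_eq_zero.mp this with e' | e'
      · exact hx1 (by linarith)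
      · exact h2 (by linarith)) hy k₁ k₂ k₃
  have hq0 : (x.den : ℚ) ≠ 0 := by exact_mod_cast x.den_nz
  obtain ⟨p, hp⟩ : ∃ p, p = x.num := ⟨_, rfl⟩
  obtain ⟨q, hq⟩ : ∃ q : ℤ, q = x.den := ⟨_, rfl⟩
  have hqQ : (q : ℚ) ≠ 0 := by rw [hq]; exact_mod_cast x.den_nz
  have hpq : IsCoprime p q := by rw [hp, hq]; exact isCoprime_num_den x
  have hpx : (p : ℚ) = x * q := by
    rw [hp, hq]
    exact (Rat.mul_den_eq_num x).symm
  have hq1 : 0 < q := by rw [hq]; exact_mod_cast x.den_pos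
  have hM : 0 < 3 * p ^ 2 + q ^ 2 := by positivity
  have key : ∀ {r : ℚ} {R : ℤ}, r ≠ 0 → (R : ℚ) = r * q → 3 * R ^ 2 ≤ 4 * (3 * p ^ 2 + q ^ 2) →
      (∀ k, k ∣ 3 * p ^ 2 + q ^ 2 → k ∣ R ^ 2 → k ∣ 8) →
      3 * ht (-N / r ^ 2) ≤ 4 * (3 * p ^ 2 + q ^ 2) ∧ 3 * p ^ 2 + q ^ 2 ≤ 8 * ht (-N / r ^ 2) := by
    intro r R hr hR hle hk
    refine ht_param hM ?_ hle hk ?_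
    · rintro rfl
      exact mul_ne_zero hr hqQ (by rw [← hR]; norm_num)
    · push_cast
      rw [hR, hpx, hN]
      field_simp
  have t₁ := key (r := 2 * x) (R := 2 * p) h0' (by push_cast; rw [hpx]; ring)
    (by nlinarith [sq_nonneg q]) (fun k => dvd_eight₁ hpq)
  have t₂ := key (r := 1 - x) (R := q - p) h1 (by push_cast; rw [hpx]; ring)
    (by nlinarith [sq_nonneg (3 * p + q)]) (fun k => dvd_eight₂ hpq)
  have t₃ := key (r := -1 - x) (R := -q - p) h2 (by push_cast; rw [hpx]; ring)
    (by nlinarith [sq_nonneg (3 * p - q)]) (fun k => dvd_eight₃ hpq)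
  have neg : ∀ {r : ℚ}, r ≠ 0 → -N / r ^ 2 < 0 := fun hr =>
    div_neg_of_neg_of_pos (neg_neg_of_pos hN0) (by positivity)
  obtain ⟨u, hu, hu'⟩ := exists_small_point k₁ k₂ k₃ hs (neg h0') (neg h1) (neg h2) t₁ t₂ t₃
  have mulu : ∀ {r : ℚ}, r ≠ 0 → u = -N / r ^ 2 → u * r ^ 2 = -(3 * x ^ 2 + 1) := by
    intro r hr e
    rw [e, hN]
    field_simp
  rcases hu with hu | hu | hu
  · have e := mulu h0' hu
    rcases hu' with rfl | rfl | rfl | rfl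
    · have : (3 * x - 1) * (3 * x + 1) = 0 := by linear_combination -e
      rcases mul_eq_zero.mp this with e' | e'
      · exact hx1 (by linarith)
      · exact hx2 (by linarith)
    · linarith
    · exact sq_ne_twentyone (21 * x) (by linear_combination -21 * e)
    · exact sq_ne_five (5 * x) (by linear_combination -5 * e)
  · have e := mulu h1 hu
    rcases hu' with rfl | rfl | rfl | rfl
    · exact hx1 (by linarith)
    · have : (3 * x + 1) ^ 2 = 0 := by linear_combination 4 * e
      have := pow_eq_zero_iff (two_ne_zero) |>.mp this
      exact hx2 (by linarith)
    · exact sq_ne_twentyone (3 * x - 6) (by linear_combination -3 * e)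
    · exact sq_ne_five (x + 2) (by linear_combination e)
  · have e := mulu h2 hu
    rcases hu' with rfl | rfl | rfl | rfl
    · exact hx2 (by linarith)
    · have : (3 * x - 1) ^ 2 = 0 := by linear_combination 4 * e
      have := pow_eq_zero_iff (two_ne_zero) |>.mp this
      exact hx1 (by linarith)
    · exact sq_ne_twentyone (3 * x + 6) (by linear_combination -3 * e)
    · exact sq_ne_five (x - 2) (by linear_combination e)

/-- The only rational points on the affine curve `y² = 9x⁶ - 99x⁴ + 27x² - 1` are
`(1/3, 8/9)`, `(1/3, -8/9)`, `(-1/3, 8/9)`, and `(-1/3, -8/9)`. -/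
theorem rational_points_of_genus_two_curve_five (x y : ℚ) :
    y ^ 2 = 9 * x ^ 6 - 99 * x ^ 4 + 27 * x ^ 2 - 1 ↔
      (x = 1 / 3 ∨ x = -(1 / 3)) ∧ (y = 8 / 9 ∨ y = -(8 / 9)) := by
  constructor
  · intro h
    have hx := x_eq h
    refine ⟨hx, ?_⟩
    have hy : (y - 8 / 9) * (y + 8 / 9) = 0 := by
      rcases hx with rfl | rfl <;> linear_combination h
    rcases mul_eq_zero.mp hy with e | e
    · exact Or.inl (by linarith)
    · exact Or.inr (by linarith)
  · rintro ⟨rfl | rfl, rfl | rfl⟩ <;> norm_num
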